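/- arXiv:1904.00848 — 11 statements merged into one kernel-verified Lean document; each statement's English description precedes it below -/
import Mathlib

section
/- Let U be an n×n unitary matrix with distinct eigenvalues u₁,…,uₙ and an orthonormal basis of eigenvectors φ₁,…,φₙ (so Uφ_j = u_j φ_j). Let v be a unit vector in ℂⁿ and set ρ_j = |⟨φ_j, v⟩|². Let η be a complex number of modulus 1 with η ≠ 1. Then for every complex number u that is not an eigenvalue of U, u is an eigenvalue of the matrix U(I + (η−1)vv*) if and only if 1 = (1−η) Σ_{j=1}^{n} ρ_j · u_j/(u_j − u). -/
open Matrix BigOperators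

/-- If `u` is not an eigenvalue of `A` and `x` solves `(A - u) x = A v`, then `u` is an eigenvalue
of the rank-one perturbation `A (1 + c v yᵀ)` iff `1 = -c (y ⬝ x)`. -/
theorem exists_eigenvector_mul_one_add_vecMulVec_iff {ι K : Type*} [Fintype ι] [DecidableEq ι]
    [Field K] (A : Matrix ι ι K) (v y x : ι → K) (c u : K)
    (hu : ¬ ∃ w : ι → K, w ≠ 0 ∧ A *ᵥ w = u • w) (hx : A *ᵥ x = u • x + A *ᵥ v) :
    (∃ w : ι → K, w ≠ 0 ∧ (A * (1 + c • vecMulVec v y)) *ᵥ w = u • w) ↔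
      1 = -c * (y ⬝ᵥ x) := by
  have key (w : ι → K) : (A * (1 + c • vecMulVec v y)) *ᵥ w =
      A *ᵥ w + (c * (y ⬝ᵥ w)) • A *ᵥ v := by
    rw [← mulVec_mulVec, add_mulVec, one_mulVec, smul_mulVec, vecMulVec_mulVec, mulVec_add,
      op_smul_eq_smul, smul_smul, mulVec_smul]
  simp only [key]
  constructor
  · rintro ⟨w, hw0, hw⟩
    have hwx : w = (-c * (y ⬝ᵥ w)) • x := by
      by_contra hne
      refine hu ⟨w - (-c * (y ⬝ᵥ w)) • x, sub_ne_zero.mpr hne, ?_⟩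
      rw [mulVec_sub, mulVec_smul, hx, eq_sub_of_add_eq hw]
      module
    have hyw : y ⬝ᵥ w ≠ 0 := fun h => hw0 (by rw [hwx, h]; simp)
    have h := congrArg (y ⬝ᵥ ·) hwx
    simp only [dotProduct_smul, smul_eq_mul] at h
    exact mul_left_cancel₀ hyw (by linear_combination h)
  · intro h
    refine ⟨x, ?_, ?_⟩
    · rintro rfl
      simp at h
    · rw [hx, show c * (y ⬝ᵥ x) = -1 by linear_combination h]
      module

/-- An orthonormal family of `n` vectors in `ℂⁿ` spans: every `v` is the sum of its components. -/
theorem sum_inner_smul_eq_of_orthonormal {ι : Type*} [Fintype ι] [DecidableEq ι]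
    (φ : ι → ι → ℂ)
    (hortho : ∀ j k, (∑ i, (starRingEnd ℂ) (φ j i) * φ k i) = if j = k then 1 else 0)
    (v : ι → ℂ) : ∑ j, (∑ i, (starRingEnd ℂ) (φ j i) * v i) • φ j = v := by
  have h : (of φ)ᵀᴴ * (of φ)ᵀ = 1 := by
    ext j k
    simpa [mul_apply, one_apply] using hortho j k
  have h' := congrArg (· *ᵥ v) (mul_eq_one_comm.mp h)
  simp only [one_mulVec, ← mulVec_mulVec] at h'
  refine Eq.trans ?_ h'
  ext i
  simp [mulVec, dotProduct, mul_comm]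

/-- For a unitary `U` with distinct eigenvalues `u_j`, orthonormal eigenbasis `φ_j`,
a unit vector `v` with `ρ_j = |⟨φ_j, v⟩|²`, and `η` of modulus one, `η ≠ 1`:
a complex `u` that is not an eigenvalue of `U` is an eigenvalue of
`U (I + (η-1) v v*)` iff `1 = (1-η) Σ_j ρ_j u_j/(u_j - u)`. -/
theorem reflection_eigenvalue_equation
    (n : ℕ) (U : Matrix (Fin n) (Fin n) ℂ)
    (hU : U ∈ Matrix.unitaryGroup (Fin n) ℂ)
    (uval : Fin n → ℂ) (hdist : Function.Injective uval)
    (φ : Fin n → Fin n → ℂ)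
    (hortho : ∀ j k, (∑ i, (starRingEnd ℂ) (φ j i) * φ k i) = if j = k then 1 else 0)
    (heig : ∀ j, U.mulVec (φ j) = uval j • φ j)
    (v : Fin n → ℂ) (hv : (∑ i, (starRingEnd ℂ) (v i) * v i) = 1)
    (η : ℂ) (hη : ‖η‖ = 1) (hη1 : η ≠ 1)
    (u : ℂ) (hu : ¬ ∃ w : Fin n → ℂ, w ≠ 0 ∧ U.mulVec w = u • w) :
    (∃ w : Fin n → ℂ, w ≠ 0 ∧
        (U * (1 + (η - 1) • Matrix.vecMulVec v (fun i => (starRingEnd ℂ) (v i)))).mulVec w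
          = u • w)
      ↔ 1 = (1 - η) *
          ∑ j, ((‖∑ i, (starRingEnd ℂ) (φ j i) * v i‖ ^ 2 : ℝ) : ℂ)
            * (uval j / (uval j - u)) := by
  have hne (j : Fin n) : uval j - u ≠ 0 := by
    intro h
    refine hu ⟨φ j, fun h0 => ?_, by rw [heig, sub_eq_zero.mp h]⟩
    simpa [h0] using hortho j j
  set c : Fin n → ℂ := fun j => ∑ i, (starRingEnd ℂ) (φ j i) * v i with hc
  have hexp : ∑ j, c j • φ j = v := sum_inner_smul_eq_of_orthonormal φ hortho v
  set x : Fin n → ℂ := ∑ j, (c j * (uval j / (uval j - u))) • φ j with hxdef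
  have hx : U *ᵥ x = u • x + U *ᵥ v := by
    rw [← hexp, hxdef]
    simp only [mulVec_sum, mulVec_smul, heig, Finset.smul_sum, ← Finset.sum_add_distrib, smul_smul,
      ← add_smul]
    refine Finset.sum_congr rfl fun j _ => ?_
    congr 1
    have := hne j
    field_simp
    ring
  have hdot (j : Fin n) : (fun i => (starRingEnd ℂ) (v i)) ⬝ᵥ φ j = (starRingEnd ℂ) (c j) := by
    simp [hc, dotProduct, mul_comm]
  rw [exists_eigenvector_mul_one_add_vecMulVec_iff U v _ x (η - 1) u hu hx, neg_sub, hxdef,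
    dotProduct_sum]
  simp only [dotProduct_smul, hdot, smul_eq_mul]
  have hsum : ∑ j, c j * (uval j / (uval j - u)) * (starRingEnd ℂ) (c j) =
      ∑ j, ((‖c j‖ ^ 2 : ℝ) : ℂ) * (uval j / (uval j - u)) := by
    refine Finset.sum_congr rfl fun j _ => ?_
    rw [Complex.ofReal_pow, ← Complex.mul_conj']
    ring
  rw [hsum]
end

section
/- Let U be an n×n unitary matrix with distinct eigenvalues u_j = e^{iθ_j}, 1 ≤ j ≤ n, where θ₁ < θ₂ < … < θₙ < θ₁ + 2π, let v be a unit vector in ℂⁿ whose coefficients a_j in an orthonormal eigenbasis of U satisfy ρ_j = |a_j|² > 0 for all j, and let η be a complex number of modulus 1 with η ≠ 1. Then the unitary matrix U(I + (η−1)vv*) has exactly one eigenvalue of the form e^{iφ} with φ ∈ (θ_j, θ_{j+1}) for each j ∈ {1,…,n} (with the convention θ_{n+1} = θ₁ + 2π), and these n eigenvalues are all of its eigenvalues; in other words, the eigenvalues of U(I + (η−1)vv*) strictly interlace with those of U on the unit circle. -/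
open Matrix BigOperators Set

theorem Real.strictAntiOn_cot_Ioo : StrictAntiOn Real.cot (Ioo 0 Real.pi) := by
  intro x hx y hy hxy
  have hsx := Real.sin_pos_of_mem_Ioo hx
  have hsy := Real.sin_pos_of_mem_Ioo hy
  have hd : 0 < Real.sin (y - x) :=
    Real.sin_pos_of_pos_of_lt_pi (by linarith) (by linarith [hx.1, hy.2])
  rw [Real.sin_sub] at hd
  rw [Real.cot_eq_cos_div_sin, Real.cot_eq_cos_div_sin, div_lt_div_iff₀ hsy hsx]
  linarith

theorem Real.continuousOn_cot_Ioo : ContinuousOn Real.cot (Ioo 0 Real.pi) := by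
  have h : Real.cot = fun x => Real.cos x / Real.sin x := funext Real.cot_eq_cos_div_sin
  rw [h]
  exact Real.continuous_cos.continuousOn.div Real.continuous_sin.continuousOn
    fun x hx => (Real.sin_pos_of_mem_Ioo hx).ne'

theorem Real.tendsto_cot_nhdsGT_zero :
    Filter.Tendsto Real.cot (nhdsWithin 0 (Ioi 0)) Filter.atTop := by
  have h : Real.cot = fun x => Real.cos x * (Real.sin x)⁻¹ := by
    funext x
    rw [Real.cot_eq_cos_div_sin, div_eq_mul_inv]
  rw [h]
  have hc : Filter.Tendsto Real.cos (nhdsWithin 0 (Ioi 0)) (nhds 1) :=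
    (Real.continuous_cos.tendsto' 0 1 Real.cos_zero).mono_left nhdsWithin_le_nhds
  refine hc.pos_mul_atTop one_pos (tendsto_inv_nhdsGT_zero.comp ?_)
  refine tendsto_nhdsWithin_iff.2
    ⟨(Real.continuous_sin.tendsto' 0 0 Real.sin_zero).mono_left nhdsWithin_le_nhds, ?_⟩
  filter_upwards [Ioo_mem_nhdsGT Real.pi_pos] with x hx using Real.sin_pos_of_mem_Ioo hx

theorem Real.cot_pi_sub (x : ℝ) : Real.cot (Real.pi - x) = -Real.cot x := by
  rw [Real.cot_eq_cos_div_sin, Real.cot_eq_cos_div_sin, Real.cos_pi_sub, Real.sin_pi_sub, neg_div]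

/-- If the poles of `x ↦ ∑ k, ρ k * cot ((x - τ k) / 2)` avoid `(a, b)` but include `a` and `b`
(modulo `2π`), this function takes every real value exactly once on `(a, b)`. -/
theorem existsUnique_sum_cot_eq {ι : Type*} [Fintype ι] (ρ τ : ι → ℝ) (hρ : ∀ k, 0 < ρ k)
    {a b : ℝ} (hab : a < b) (hτa : ∀ k, τ k ≤ a) (hτb : ∀ k, b ≤ τ k + 2 * Real.pi)
    (ha : ∃ k, τ k = a) (hb : ∃ k, b = τ k + 2 * Real.pi) (C : ℝ) :
    ∃! x, x ∈ Ioo a b ∧ ∑ k, ρ k * Real.cot ((x - τ k) / 2) = C := by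
  classical
  have hmem : ∀ k, ∀ x ∈ Ioo a b, (x - τ k) / 2 ∈ Ioo 0 Real.pi := fun k x hx =>
    ⟨by linarith [hx.1, hτa k], by linarith [hx.2, hτb k]⟩
  have hanti : ∀ k, StrictAntiOn (fun x => ρ k * Real.cot ((x - τ k) / 2)) (Ioo a b) :=
    fun k x hx y hy hxy => mul_lt_mul_of_pos_left
      (Real.strictAntiOn_cot_Ioo (hmem k x hx) (hmem k y hy) (by linarith)) (hρ k)
  obtain ⟨ka, hka⟩ := ha
  obtain ⟨kb, hkb⟩ := hb
  have hF : StrictAntiOn (fun x => ∑ k, ρ k * Real.cot ((x - τ k) / 2)) (Ioo a b) :=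
    fun x hx y hy hxy => Finset.sum_lt_sum_of_nonempty ⟨ka, Finset.mem_univ ka⟩
      fun k _ => hanti k hx hy hxy
  have hcont : ContinuousOn (fun x => ∑ k, ρ k * Real.cot ((x - τ k) / 2)) (Ioo a b) :=
    continuousOn_finsetSum _ fun k _ => continuousOn_const.mul
      (Real.continuousOn_cot_Ioo.comp (by fun_prop) (hmem k))
  have hrest : ∀ k, AntitoneOn
      (fun x => ∑ l ∈ Finset.univ.erase k, ρ l * Real.cot ((x - τ l) / 2)) (Ioo a b) :=
    fun k x hx y hy hxy => Finset.sum_le_sum fun l _ => (hanti l).antitoneOn hx hy hxy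
  have hsplit : ∀ k x, ∑ l, ρ l * Real.cot ((x - τ l) / 2) = ρ k * Real.cot ((x - τ k) / 2)
      + ∑ l ∈ Finset.univ.erase k, ρ l * Real.cot ((x - τ l) / 2) := fun k x =>
    (Finset.add_sum_erase _ _ (Finset.mem_univ k)).symm
  obtain ⟨m, hm⟩ := exists_between hab
  have hleft : ∃ x ∈ Ioo a b, C < ∑ k, ρ k * Real.cot ((x - τ k) / 2) := by
    have ht : Filter.Tendsto (fun x => (x - τ ka) / 2) (nhdsWithin a (Ioi a))
        (nhdsWithin 0 (Ioi 0)) := by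
      refine tendsto_nhdsWithin_iff.2 ⟨?_, ?_⟩
      · refine Filter.Tendsto.mono_left (Continuous.tendsto' (by fun_prop) a 0 ?_)
          nhdsWithin_le_nhds
        rw [hka]; simp
      · filter_upwards [self_mem_nhdsWithin] with x hx
        have : a < x := hx
        exact mem_Ioi.2 (by linarith)
    have hlarge := ((Real.tendsto_cot_nhdsGT_zero.comp ht).const_mul_atTop
      (hρ ka)).eventually_gt_atTop
        (C - ∑ l ∈ Finset.univ.erase ka, ρ l * Real.cot ((m - τ l) / 2))
    obtain ⟨x, hx, hxm⟩ := (hlarge.and (Ioo_mem_nhdsGT hm.1)).exists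
    have hxab : x ∈ Ioo a b := ⟨hxm.1, hxm.2.trans hm.2⟩
    have h := hrest ka hxab hm hxm.2.le
    refine ⟨x, hxab, ?_⟩
    rw [hsplit ka]
    simp only [Function.comp_apply] at hx h
    linarith
  have hright : ∃ x ∈ Ioo a b, ∑ k, ρ k * Real.cot ((x - τ k) / 2) < C := by
    have ht : Filter.Tendsto (fun x => Real.pi - (x - τ kb) / 2) (nhdsWithin b (Iio b))
        (nhdsWithin 0 (Ioi 0)) := by
      refine tendsto_nhdsWithin_iff.2 ⟨?_, ?_⟩
      · refine Filter.Tendsto.mono_left (Continuous.tendsto' (by fun_prop) b 0 ?_)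
          nhdsWithin_le_nhds
        rw [hkb]; ring
      · filter_upwards [self_mem_nhdsWithin] with x hx
        have : x < b := hx
        exact mem_Ioi.2 (by linarith)
    have hlarge := ((Real.tendsto_cot_nhdsGT_zero.comp ht).const_mul_atTop
      (hρ kb)).eventually_gt_atTop
        ((∑ l ∈ Finset.univ.erase kb, ρ l * Real.cot ((m - τ l) / 2)) - C)
    obtain ⟨x, hx, hxm⟩ := (hlarge.and (Ioo_mem_nhdsLT hm.2)).exists
    have hxab : x ∈ Ioo a b := ⟨hm.1.trans hxm.1, hxm.2⟩
    have h := hrest kb hm hxab hxm.1.le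
    refine ⟨x, hxab, ?_⟩
    rw [hsplit kb]
    simp only [Function.comp_apply, Real.cot_pi_sub] at hx h
    linarith
  obtain ⟨x₁, hx₁, h₁⟩ := hleft
  obtain ⟨x₂, hx₂, h₂⟩ := hright
  obtain ⟨x, hx, hxC⟩ := isPreconnected_Ioo.intermediate_value hx₂ hx₁ hcont ⟨h₂.le, h₁.le⟩
  exact ⟨x, ⟨hx, hxC⟩, fun y hy => hF.injOn hy.1 hx (hy.2.trans hxC.symm)⟩

theorem Complex.exp_sub_exp_eq (x t : ℝ) :
    Complex.exp (Complex.I * x) - Complex.exp (Complex.I * t)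
      = Complex.exp (Complex.I * ((x + t) / 2 : ℝ)) *
        (2 * Complex.I * (Real.sin ((x - t) / 2) : ℂ)) := by
  have h : ∀ d : ℂ, 2 * Complex.I * Complex.sin d
      = Complex.exp (Complex.I * d) - Complex.exp (-(Complex.I * d)) := fun d => by
    rw [Complex.sin, neg_mul, mul_comm d]
    linear_combination (Complex.exp (-(Complex.I * d)) - Complex.exp (Complex.I * d))
      * Complex.I_sq
  rw [Complex.ofReal_sin, h, mul_sub, ← Complex.exp_add, ← Complex.exp_add]
  push_cast
  congr 2 <;> ring

theorem Complex.exp_add_exp_eq (x t : ℝ) :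
    Complex.exp (Complex.I * x) + Complex.exp (Complex.I * t)
      = Complex.exp (Complex.I * ((x + t) / 2 : ℝ)) *
        (2 * (Real.cos ((x - t) / 2) : ℂ)) := by
  have h : ∀ d : ℂ, 2 * Complex.cos d
      = Complex.exp (Complex.I * d) + Complex.exp (-(Complex.I * d)) := fun d => by
    rw [Complex.cos, neg_mul, mul_comm d]
    ring
  rw [Complex.ofReal_cos, h, mul_add, ← Complex.exp_add, ← Complex.exp_add]
  push_cast
  congr 2 <;> ring

theorem Complex.exp_add_exp_div_exp_sub_exp (x t : ℝ) :
    (Complex.exp (Complex.I * x) + Complex.exp (Complex.I * t)) /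
      (Complex.exp (Complex.I * x) - Complex.exp (Complex.I * t))
      = -Complex.I * (Real.cot ((x - t) / 2) : ℂ) := by
  rw [Complex.exp_sub_exp_eq, Complex.exp_add_exp_eq, mul_div_mul_left _ _ (Complex.exp_ne_zero _),
    Real.cot_eq_cos_div_sin, Complex.ofReal_div, mul_assoc, mul_div_mul_left _ _ two_ne_zero,
    mul_comm Complex.I, ← div_div, div_eq_mul_inv _ Complex.I, Complex.inv_I]
  ring

theorem Complex.re_add_div_sub (z w : ℂ) :
    ((z + w) / (z - w)).re = (‖z‖ ^ 2 - ‖w‖ ^ 2) / ‖z - w‖ ^ 2 := by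
  simp only [Complex.div_re, ← Complex.normSq_eq_norm_sq, ← add_div]
  congr 1
  simp only [Complex.normSq_apply, Complex.add_re, Complex.sub_re, Complex.add_im, Complex.sub_im]
  ring

/-- The secular equation for a multiplicative rank one perturbation of a diagonal matrix. -/
theorem exists_eigenvector_diagonal_mul_reflection_iff {ι : Type*} [Fintype ι]
    {u a : ι → ℂ} (hu : Function.Injective u) (hu0 : ∀ k, u k ≠ 0) (ha : ∀ k, a k ≠ 0)
    (hnorm : ∑ k, ‖a k‖ ^ 2 = 1) {η : ℂ} (hη1 : η ≠ 1) (μ : ℂ) :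
    (∃ y : ι → ℂ, y ≠ 0 ∧
        ∀ k, u k * (y k + (η - 1) * (a k * ∑ l, star (a l) * y l)) = μ * y k) ↔
      (∀ k, μ ≠ u k) ∧
        ∑ k, ((‖a k‖ ^ 2 : ℝ) : ℂ) * ((μ + u k) / (μ - u k)) = (η + 1) / (η - 1) := by
  have hη0 : η - 1 ≠ 0 := sub_ne_zero.2 hη1
  have hsec : (∀ k, μ ≠ u k) →
      (∑ k, ((‖a k‖ ^ 2 : ℝ) : ℂ) * ((μ + u k) / (μ - u k)) = (η + 1) / (η - 1) ↔
        ∑ l, star (a l) * ((η - 1) * u l * a l / (μ - u l)) = 1) := by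
    intro hμ
    have hterm : ∀ k, ((‖a k‖ ^ 2 : ℝ) : ℂ) * ((μ + u k) / (μ - u k))
        = ((‖a k‖ ^ 2 : ℝ) : ℂ)
          + 2 / (η - 1) * (star (a k) * ((η - 1) * u k * a k / (μ - u k))) := by
      intro k
      have hk : μ - u k ≠ 0 := sub_ne_zero.2 (hμ k)
      have hsq : ((‖a k‖ ^ 2 : ℝ) : ℂ) = star (a k) * a k := by
        rw [Complex.ofReal_pow]; exact (Complex.conj_mul' (a k)).symm
      rw [hsq]
      field_simp
      ring
    rw [Finset.sum_congr rfl fun k _ => hterm k, Finset.sum_add_distrib, ← Finset.mul_sum,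
      ← Complex.ofReal_sum, hnorm]
    have hrhs : (η + 1) / (η - 1) = ((1 : ℝ) : ℂ) + 2 / (η - 1) * 1 := by
      push_cast
      field_simp
      ring
    rw [hrhs, add_right_inj, mul_right_inj' (div_ne_zero two_ne_zero hη0)]
  constructor
  · rintro ⟨y, hy, h⟩
    set c := ∑ l, star (a l) * y l with hc
    have hmul : ∀ k, (μ - u k) * y k = (η - 1) * u k * a k * c := fun k => by
      linear_combination -h k
    have hc0 : c ≠ 0 := by
      intro h0
      obtain ⟨k, hk⟩ := Function.ne_iff.1 hy
      have hzero : ∀ l, μ = u l ∨ y l = 0 := fun l => by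
        simpa [h0, sub_eq_zero] using hmul l
      have hμk : μ = u k := (hzero k).resolve_right hk
      have hck : c = star (a k) * y k := by
        refine Finset.sum_eq_single_of_mem k (Finset.mem_univ k) fun l _ hl => ?_
        rw [(hzero l).resolve_left fun hμl => hl (hu (hμl.symm.trans hμk)), mul_zero]
      exact mul_ne_zero (star_ne_zero.2 (ha k)) hk (hck.symm.trans h0)
    have hμ : ∀ k, μ ≠ u k := fun k hk =>
      mul_ne_zero (mul_ne_zero (mul_ne_zero hη0 (hu0 k)) (ha k)) hc0
        (by rw [← hmul k, hk, sub_self, zero_mul])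
    refine ⟨hμ, (hsec hμ).2 (mul_right_cancel₀ hc0 ?_)⟩
    rw [one_mul, Finset.sum_mul]
    conv_rhs => rw [hc]
    refine Finset.sum_congr rfl fun k _ => ?_
    rw [mul_assoc, div_mul_eq_mul_div, ← hmul k, mul_div_cancel_left₀ _ (sub_ne_zero.2 (hμ k))]
  · rintro ⟨hμ, h⟩
    have h1 := (hsec hμ).1 h
    refine ⟨fun l => (η - 1) * u l * a l / (μ - u l), ?_, fun k => ?_⟩
    · intro h0
      have hz : ∀ l, (η - 1) * u l * a l / (μ - u l) = 0 := fun l => congrFun h0 l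
      simp [hz] at h1
    · have hk : μ - u k ≠ 0 := sub_ne_zero.2 (hμ k)
      simp only [h1]
      field_simp
      ring

theorem exists_eigenvector_mul_reflection_iff {ι : Type*} [Fintype ι] [DecidableEq ι]
    {U P : Matrix ι ι ℂ} {u : ι → ℂ} (hP : Pᴴ * P = 1) (hUP : U * P = P * diagonal u)
    (v : ι → ℂ) (η μ : ℂ) :
    (∃ w : ι → ℂ, w ≠ 0 ∧ (U * (1 + (η - 1) • vecMulVec v (star v))) *ᵥ w = μ • w) ↔
      ∃ y : ι → ℂ, y ≠ 0 ∧ ∀ k, u k * (y k + (η - 1) * ((Pᴴ *ᵥ v) k *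
        ∑ l, star ((Pᴴ *ᵥ v) l) * y l)) = μ * y k := by
  have hP' : P * Pᴴ = 1 := mul_eq_one_comm.1 hP
  have hinj : Function.Injective (P *ᵥ ·) := fun x y h => by
    simpa [hP] using congrArg (Pᴴ *ᵥ ·) h
  have hconj : ∀ y : ι → ℂ, (U * (1 + (η - 1) • vecMulVec v (star v))) *ᵥ (P *ᵥ y)
      = P *ᵥ fun k => u k * (y k + (η - 1) * ((Pᴴ *ᵥ v) k *
        ∑ l, star ((Pᴴ *ᵥ v) l) * y l)) := by
    intro y
    have hdot : star v ⬝ᵥ (P *ᵥ y) = ∑ l, star ((Pᴴ *ᵥ v) l) * y l := by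
      rw [dotProduct_mulVec]
      refine Finset.sum_congr rfl fun l _ => ?_
      rw [← Pi.star_apply, star_mulVec, conjTranspose_conjTranspose]
    have hv : v = P *ᵥ (Pᴴ *ᵥ v) := by rw [mulVec_mulVec, hP', one_mulVec]
    have hin : (1 + (η - 1) • vecMulVec v (star v)) *ᵥ (P *ᵥ y)
        = P *ᵥ (y + ((η - 1) * ∑ l, star ((Pᴴ *ᵥ v) l) * y l) • (Pᴴ *ᵥ v)) := by
      rw [mulVec_add, mulVec_smul, ← hv, add_mulVec, one_mulVec, smul_mulVec, vecMulVec_mulVec,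
        hdot, op_smul_eq_smul, smul_smul]
    rw [← mulVec_mulVec, hin, mulVec_mulVec, hUP, ← mulVec_mulVec]
    congr 1
    funext k
    rw [mulVec_diagonal]
    simp only [Pi.add_apply, Pi.smul_apply, smul_eq_mul]
    ring
  constructor
  · rintro ⟨w, hw, h⟩
    have hPw : P *ᵥ (Pᴴ *ᵥ w) = w := by rw [mulVec_mulVec, hP', one_mulVec]
    refine ⟨Pᴴ *ᵥ w, fun h0 => hw (by rw [← hPw, h0, mulVec_zero]), fun k => ?_⟩
    rw [← hPw, hconj, ← mulVec_smul] at h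
    simpa [hP] using congrFun (hinj h) k
  · rintro ⟨y, hy, h⟩
    refine ⟨P *ᵥ y, fun h0 => hy (hinj (by simpa using h0)), ?_⟩
    rw [hconj, ← mulVec_smul]
    exact congrArg (P *ᵥ ·) (funext h)

/-- Strict interlacing on the unit circle of the eigenvalues of `U (I + (η-1) v v*)`
with those of `U`: there is exactly one eigenvalue `e^{ix}` with
`x ∈ (θ_j, θ_{j+1})` for each `j` (convention `θ_{n+1} = θ_1 + 2π`), and these are
all the eigenvalues. -/
theorem reflection_eigenvalue_interlacing
    (n : ℕ) (hn : 0 < n)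
    (U : Matrix (Fin n) (Fin n) ℂ) (hU : U ∈ Matrix.unitaryGroup (Fin n) ℂ)
    (θ : Fin n → ℝ) (hθmono : StrictMono θ)
    (hθ2π : ∀ j, θ j < θ ⟨0, hn⟩ + 2 * Real.pi)
    (φ : Fin n → Fin n → ℂ)
    (hortho : ∀ j k, (∑ i, (starRingEnd ℂ) (φ j i) * φ k i) = if j = k then 1 else 0)
    (heig : ∀ j, U.mulVec (φ j) = Complex.exp (Complex.I * (θ j : ℂ)) • φ j)
    (v : Fin n → ℂ) (hv : (∑ i, (starRingEnd ℂ) (v i) * v i) = 1)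
    (hρ : ∀ j, (∑ i, (starRingEnd ℂ) (φ j i) * v i) ≠ 0)
    (η : ℂ) (hη : ‖η‖ = 1) (hη1 : η ≠ 1) :
    (∀ j : Fin n, ∃! x : ℝ,
        x ∈ Set.Ioo (θ j)
          (if h : (j : ℕ) + 1 < n then θ ⟨(j : ℕ) + 1, h⟩ else θ ⟨0, hn⟩ + 2 * Real.pi) ∧
        ∃ w : Fin n → ℂ, w ≠ 0 ∧
          (U * (1 + (η - 1) • Matrix.vecMulVec v (fun i => (starRingEnd ℂ) (v i)))).mulVec w
            = Complex.exp (Complex.I * (x : ℂ)) • w)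
    ∧ (∀ μ : ℂ,
        (∃ w : Fin n → ℂ, w ≠ 0 ∧
          (U * (1 + (η - 1) • Matrix.vecMulVec v (fun i => (starRingEnd ℂ) (v i)))).mulVec w
            = μ • w) →
        ∃ j : Fin n, ∃ x ∈ Set.Ioo (θ j)
            (if h : (j : ℕ) + 1 < n then θ ⟨(j : ℕ) + 1, h⟩ else θ ⟨0, hn⟩ + 2 * Real.pi),
          μ = Complex.exp (Complex.I * (x : ℂ))) := by
  set u : Fin n → ℂ := fun k => Complex.exp (Complex.I * (θ k : ℂ)) with hu_def
  set P : Matrix (Fin n) (Fin n) ℂ := Matrix.of fun i k => φ k i with hP_def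
  have hP : Pᴴ * P = 1 := by
    ext j k
    rw [Matrix.mul_apply, Matrix.one_apply]
    exact hortho j k
  have hUP : U * P = P * diagonal u := by
    ext i k
    rw [mul_diagonal, mul_comm]
    exact congrFun (heig k) i
  set a : Fin n → ℂ := Pᴴ *ᵥ v with ha_def
  have ha : ∀ k, a k ≠ 0 := hρ
  have hnorm : ∑ k, ‖a k‖ ^ 2 = 1 := by
    have h : star a ⬝ᵥ a = 1 := by
      rw [ha_def, star_mulVec, conjTranspose_conjTranspose, dotProduct_mulVec, vecMul_vecMul,
        mul_eq_one_comm.1 hP, vecMul_one]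
      exact hv
    have h' : ((∑ k, ‖a k‖ ^ 2 : ℝ) : ℂ) = star a ⬝ᵥ a := by
      push_cast
      exact Finset.sum_congr rfl fun k _ => (Complex.conj_mul' (a k)).symm
    exact_mod_cast h'.trans h
  have hθle : ∀ k, θ ⟨0, hn⟩ ≤ θ k := fun k => hθmono.monotone (Nat.zero_le _)
  have hu0 : ∀ k, u k ≠ 0 := fun k => Complex.exp_ne_zero _
  have hexp_ne : ∀ x t : ℝ, t < x → x < t + 2 * Real.pi →
      Complex.exp (Complex.I * (x : ℂ)) ≠ Complex.exp (Complex.I * (t : ℂ)) := by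
    intro x t h1 h2
    have hs : Real.sin ((x - t) / 2) ≠ 0 :=
      (Real.sin_pos_of_pos_of_lt_pi (by linarith) (by linarith)).ne'
    rw [← sub_ne_zero, Complex.exp_sub_exp_eq]
    exact mul_ne_zero (Complex.exp_ne_zero _)
      (mul_ne_zero (mul_ne_zero two_ne_zero Complex.I_ne_zero) (Complex.ofReal_ne_zero.2 hs))
  have hu : Function.Injective u := by
    intro j k
    contrapose!
    intro hjk
    rcases lt_or_gt_of_ne hjk with h | h
    · exact (hexp_ne _ _ (hθmono h) (by linarith [hθ2π k, hθle j])).symm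
    · exact hexp_ne _ _ (hθmono h) (by linarith [hθ2π j, hθle k])
  have hη_re : ((η + 1) / (η - 1)).re = 0 := by rw [Complex.re_add_div_sub, hη]; simp
  have hη_eq : (η + 1) / (η - 1) = -Complex.I * ((-((η + 1) / (η - 1)).im : ℝ) : ℂ) := by
    apply Complex.ext <;> simp [hη_re]
  have key : ∀ μ : ℂ, (∃ w : Fin n → ℂ, w ≠ 0 ∧
      (U * (1 + (η - 1) • Matrix.vecMulVec v (fun i => (starRingEnd ℂ) (v i)))).mulVec w
        = μ • w) ↔ (∀ k, μ ≠ u k) ∧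
        ∑ k, ((‖a k‖ ^ 2 : ℝ) : ℂ) * ((μ + u k) / (μ - u k)) = (η + 1) / (η - 1) := fun μ =>
    (exists_eigenvector_mul_reflection_iff hP hUP v η μ).trans
      (exists_eigenvector_diagonal_mul_reflection_iff hu hu0 ha hnorm hη1 μ)
  simp only [key]
  constructor
  · intro j
    set b : ℝ := if h : (j : ℕ) + 1 < n then θ ⟨(j : ℕ) + 1, h⟩ else θ ⟨0, hn⟩ + 2 * Real.pi
      with hb_def
    set τ : Fin n → ℝ := fun k => if k ≤ j then θ k else θ k - 2 * Real.pi with hτ_def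
    have hτu : ∀ k, u k = Complex.exp (Complex.I * (τ k : ℂ)) := by
      intro k
      by_cases hk : k ≤ j
      · simp only [hu_def, hτ_def, if_pos hk]
      · simp only [hu_def, hτ_def, if_neg hk]
        rw [← Complex.exp_periodic.sub_eq]
        push_cast
        congr 1
        ring
    have hjb : θ j < b := by
      rw [hb_def]
      split_ifs with h
      · exact hθmono (Fin.lt_def.2 (Nat.lt_succ_self _))
      · exact hθ2π j
    have hbk : b ≤ θ ⟨0, hn⟩ + 2 * Real.pi := by
      rw [hb_def]
      split_ifs with h
      · exact (hθ2π _).le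
      · exact le_rfl
    have hτa : ∀ k, τ k ≤ θ j := by
      intro k
      simp only [hτ_def]
      split_ifs with hk
      · exact hθmono.monotone hk
      · linarith [hθ2π k, hθle j]
    have hτb : ∀ k, b ≤ τ k + 2 * Real.pi := by
      intro k
      simp only [hτ_def]
      split_ifs with hk
      · linarith [hθle k]
      · have hjk : (j : ℕ) + 1 ≤ k := not_le.1 hk
        rw [hb_def, dif_pos (hjk.trans_lt k.2), sub_add_cancel]
        exact hθmono.monotone hjk
    have hτb' : ∃ k, b = τ k + 2 * Real.pi := by
      by_cases h : (j : ℕ) + 1 < n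
      · refine ⟨⟨(j : ℕ) + 1, h⟩, ?_⟩
        have hk : ¬ (⟨(j : ℕ) + 1, h⟩ : Fin n) ≤ j := not_le.2 (Fin.lt_def.2 (Nat.lt_succ_self _))
        simp only [hb_def, dif_pos h, hτ_def, if_neg hk, sub_add_cancel]
      · refine ⟨⟨0, hn⟩, ?_⟩
        have hk : (⟨0, hn⟩ : Fin n) ≤ j := Nat.zero_le _
        simp only [hb_def, dif_neg h, hτ_def, if_pos hk]
    have hiff : ∀ x : ℝ, (x ∈ Ioo (θ j) b ∧ (∀ k, Complex.exp (Complex.I * (x : ℂ)) ≠ u k) ∧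
        ∑ k, ((‖a k‖ ^ 2 : ℝ) : ℂ) * ((Complex.exp (Complex.I * (x : ℂ)) + u k) /
          (Complex.exp (Complex.I * (x : ℂ)) - u k)) = (η + 1) / (η - 1)) ↔
        (x ∈ Ioo (θ j) b ∧
          ∑ k, ‖a k‖ ^ 2 * Real.cot ((x - τ k) / 2) = -((η + 1) / (η - 1)).im) := by
      intro x
      refine and_congr_right fun hx => ?_
      have hne : ∀ k, Complex.exp (Complex.I * (x : ℂ)) ≠ u k := fun k => by
        rw [hτu]
        exact hexp_ne _ _ ((hτa k).trans_lt hx.1) (hx.2.trans_le (hτb k))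
      have hsum : ∑ k, ((‖a k‖ ^ 2 : ℝ) : ℂ) * ((Complex.exp (Complex.I * (x : ℂ)) + u k) /
          (Complex.exp (Complex.I * (x : ℂ)) - u k))
          = -Complex.I * ((∑ k, ‖a k‖ ^ 2 * Real.cot ((x - τ k) / 2) : ℝ) : ℂ) := by
        rw [Complex.ofReal_sum, Finset.mul_sum]
        refine Finset.sum_congr rfl fun k _ => ?_
        rw [hτu, Complex.exp_add_exp_div_exp_sub_exp, Complex.ofReal_mul]
        ring
      rw [and_iff_right hne, hsum, hη_eq, mul_right_inj' (neg_ne_zero.2 Complex.I_ne_zero),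
        Complex.ofReal_inj, ← hη_eq]
    simp only [hiff]
    exact existsUnique_sum_cot_eq _ τ (fun k => pow_pos (norm_pos_iff.2 (ha k)) 2) hjb hτa hτb
      ⟨j, if_pos le_rfl⟩ hτb' _
  · rintro μ ⟨hμ, hsec⟩
    have hμ1 : ‖μ‖ = 1 := by
      have hre := congrArg Complex.re hsec
      have hterm : ∀ k, (((‖a k‖ ^ 2 : ℝ) : ℂ) * ((μ + u k) / (μ - u k))).re
          = (‖μ‖ ^ 2 - 1) * (‖a k‖ ^ 2 / ‖μ - u k‖ ^ 2) := by
        intro k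
        have huk : ‖u k‖ = 1 := by
          simp only [hu_def]
          rw [mul_comm, Complex.norm_exp_ofReal_mul_I]
        rw [Complex.re_ofReal_mul, Complex.re_add_div_sub, huk]
        ring
      rw [hη_re, Complex.re_sum, Finset.sum_congr rfl fun k _ => hterm k, ← Finset.mul_sum] at hre
      have hpos : 0 < ∑ k, ‖a k‖ ^ 2 / ‖μ - u k‖ ^ 2 :=
        Finset.sum_pos (fun k _ => div_pos (pow_pos (norm_pos_iff.2 (ha k)) 2)
          (pow_pos (norm_pos_iff.2 (sub_ne_zero.2 (hμ k))) 2)) ⟨⟨0, hn⟩, Finset.mem_univ _⟩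
      have hsq := (mul_eq_zero.1 hre).resolve_right hpos.ne'
      nlinarith [norm_nonneg μ]
    have h2pi := Real.two_pi_pos
    obtain ⟨x, hx, hμx⟩ : ∃ x ∈ Ico (θ ⟨0, hn⟩) (θ ⟨0, hn⟩ + 2 * Real.pi),
        μ = Complex.exp (Complex.I * (x : ℂ)) := by
      refine ⟨toIcoMod h2pi (θ ⟨0, hn⟩) μ.arg, toIcoMod_mem_Ico h2pi _ _, ?_⟩
      have hp := Complex.exp_periodic.sub_zsmul_eq (x := Complex.I * (μ.arg : ℂ))
        (toIcoDiv h2pi (θ ⟨0, hn⟩) μ.arg)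
      have hμarg := Complex.norm_mul_exp_arg_mul_I μ
      rw [hμ1, Complex.ofReal_one, one_mul, mul_comm] at hμarg
      refine (hp.trans hμarg).symm.trans ?_
      rw [toIcoMod]
      congr 1
      simp only [zsmul_eq_mul]
      push_cast
      ring
    have hne : ∀ k, x ≠ θ k := fun k hk => hμ k (by rw [hμx, hk])
    obtain ⟨j, hj, hmax⟩ := (Finset.univ.filter fun k => θ k ≤ x).exists_maximal
      ⟨⟨0, hn⟩, by simpa using hx.1⟩
    simp only [Finset.mem_filter, Finset.mem_univ, true_and] at hj hmax
    refine ⟨j, x, ⟨lt_of_le_of_ne hj (hne j).symm, ?_⟩, hμx⟩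
    split_ifs with h
    · by_contra hle
      exact absurd (hmax (not_lt.1 hle) (Nat.le_succ _))
        (not_le.2 (Fin.lt_def.2 (Nat.lt_succ_self _)))
    · exact hx.2
end

section
/- Assume that for all a, b ∈ ℝ one has Λ([0, x+a]) − Λ([−x+b, 0]) = O(x/log²x) as x → ∞. Then for every z ∈ ℂ∖L there exists S_Λ(z) ∈ ℂ such that Σ_{λ ∈ L ∩ [−c,c]} γ_λ/(λ − z) converges to S_Λ(z) as c → ∞. -/
open Filter Set Asymptotics Topology

theorem summable_inv_mul_log_sq :
    Summable (fun n : ℕ => ((n : ℝ) * Real.log n ^ 2)⁻¹) := by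
  have hlog2 : 0 < Real.log 2 := Real.log_pos one_lt_two
  rw [← summable_condensed_iff_of_eventually_nonneg]
  · have h := (Real.summable_nat_pow_inv.mpr one_lt_two).mul_left ((Real.log 2 ^ 2)⁻¹)
    refine h.congr fun k => ?_
    push_cast
    rw [Real.log_pow]
    have : (2 : ℝ) ^ k ≠ 0 := by positivity
    rw [mul_inv, ← mul_assoc, mul_inv_cancel₀ this, one_mul, mul_pow, mul_inv, mul_comm]
  · exact Eventually.of_forall fun n => by positivity
  · filter_upwards [eventually_ge_atTop 2] with n hn
    have hn' : (2 : ℝ) ≤ n := by exact_mod_cast hn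
    have := Real.log_pos (show (1 : ℝ) < n by linarith)
    push_cast
    gcongr <;> linarith

theorem tsum_inter_Icc_eq_sum {E : Type*} [AddCommMonoid E] [TopologicalSpace E]
    {L : Set ℝ} (hL : ∀ a b : ℝ, (L ∩ Icc a b).Finite) (w : ℝ → E) (a b : ℝ) :
    ∑' l : ↥(L ∩ Icc a b), w l = ∑ l ∈ (hL a b).toFinset, w l := by
  rw [← Finset.tsum_subtype', (hL a b).coe_toFinset]

theorem toFinset_inter_Icc_subset {L : Set ℝ} (hL : ∀ a b : ℝ, (L ∩ Icc a b).Finite)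
    {a b a' b' : ℝ} (ha : a' ≤ a) (hb : b ≤ b') :
    (hL a b).toFinset ⊆ (hL a' b').toFinset :=
  Finite.toFinset_subset_toFinset.mpr (inter_subset_inter_right L (Icc_subset_Icc ha hb))

theorem sum_symm_Icc_sub_sum {L : Set ℝ} (hL : ∀ a b : ℝ, (L ∩ Icc a b).Finite)
    (w p q : ℝ → ℝ) {c d : ℝ} (hc : 0 ≤ c) (hcd : c ≤ d) (hp : ∀ l, 0 < l → w l = p l)
    (hq : ∀ l, l < 0 → w l = q l) :
    ∑ l ∈ (hL (-d) d).toFinset, w l - ∑ l ∈ (hL (-c) c).toFinset, w l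
      = (∑ l ∈ (hL 0 d).toFinset, p l - ∑ l ∈ (hL 0 c).toFinset, p l)
        + (∑ l ∈ (hL (-d) 0).toFinset, q l - ∑ l ∈ (hL (-c) 0).toFinset, q l) := by
  have hneg : -d ≤ -c := neg_le_neg hcd
  rw [← Finset.sum_sdiff_eq_sub (toFinset_inter_Icc_subset hL hneg hcd),
    ← Finset.sum_sdiff_eq_sub (toFinset_inter_Icc_subset hL le_rfl hcd),
    ← Finset.sum_sdiff_eq_sub (toFinset_inter_Icc_subset hL hneg le_rfl)]
  have hP : ∑ l ∈ (hL 0 d).toFinset \ (hL 0 c).toFinset, p l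
      = ∑ l ∈ (hL 0 d).toFinset \ (hL 0 c).toFinset, w l := by
    refine Finset.sum_congr rfl fun l hl => (hp l ?_).symm
    simp only [Finset.mem_sdiff, Finite.mem_toFinset, mem_inter_iff, mem_Icc] at hl
    grind
  have hQ : ∑ l ∈ (hL (-d) 0).toFinset \ (hL (-c) 0).toFinset, q l
      = ∑ l ∈ (hL (-d) 0).toFinset \ (hL (-c) 0).toFinset, w l := by
    refine Finset.sum_congr rfl fun l hl => (hq l ?_).symm
    simp only [Finset.mem_sdiff, Finite.mem_toFinset, mem_inter_iff, mem_Icc] at hl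
    grind
  rw [hP, hQ, ← Finset.sum_union]
  · congr 1
    ext l
    simp only [Finset.mem_union, Finset.mem_sdiff, Finite.mem_toFinset, mem_inter_iff, mem_Icc]
    grind
  · rw [Finset.disjoint_left]
    intro l
    simp only [Finset.mem_sdiff, Finite.mem_toFinset, mem_inter_iff, mem_Icc]
    grind

theorem exists_tendsto_of_summable_sub {E : Type*} [NormedAddCommGroup E]
    {G : ℕ → E} (h : Summable fun n => G (n + 1) - G n) :
    ∃ S, Tendsto G atTop (𝓝 S) := by
  obtain ⟨s, hs⟩ := h
  refine ⟨s + G 0, ?_⟩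
  have := hs.tendsto_sum_nat.add_const (G 0)
  simpa only [Finset.sum_range_sub, sub_add_cancel] using this

theorem half_le_norm_ofReal_sub {z : ℂ} {n l : ℝ} (hz : 2 * ‖z‖ ≤ n) (hl : n ≤ |l|) :
    n / 2 ≤ ‖(l : ℂ) - z‖ := by
  have := norm_sub_norm_le (l : ℂ) z
  rw [Complex.norm_real, Real.norm_eq_abs] at this
  linarith

theorem norm_inv_ofReal_sub_sub_sign_div_le {z : ℂ} {n l : ℝ} (hn : 0 < n) (hz : 2 * ‖z‖ ≤ n)
    (hl : n ≤ |l|) (hl' : |l| ≤ n + 1) :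
    ‖((l : ℂ) - z)⁻¹ - (Real.sign l : ℂ) / n‖ ≤ 2 * (1 + ‖z‖) / n ^ 2 := by
  have hd := half_le_norm_ofReal_sub hz hl
  have hd0 : 0 < ‖(l : ℂ) - z‖ := by linarith
  have hne : (l : ℂ) - z ≠ 0 := norm_pos_iff.mp hd0
  have hnC : (n : ℂ) ≠ 0 := by exact_mod_cast hn.ne'
  have hs : (Real.sign l) ^ 2 = 1 ∧ |n - Real.sign l * l| ≤ 1 := by
    rcases lt_trichotomy l 0 with h | h | h
    · rw [Real.sign_of_neg h, abs_le]; rw [abs_of_neg h] at hl hl'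
      exact ⟨by norm_num, by linarith, by linarith⟩
    · simp [h] at hl; linarith
    · rw [Real.sign_of_pos h, abs_le]; rw [abs_of_pos h] at hl hl'
      exact ⟨by norm_num, by linarith, by linarith⟩
  obtain ⟨hs2, hs1⟩ := hs
  have habs : |Real.sign l| = 1 := by
    rwa [← abs_sq, abs_pow, pow_eq_one_iff_of_nonneg (abs_nonneg _) two_ne_zero] at hs2
  have key : ((l : ℂ) - z)⁻¹ - (Real.sign l : ℂ) / n
      = (((n - Real.sign l * l : ℝ) : ℂ) + Real.sign l * z) / (n * ((l : ℂ) - z)) := by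
    field_simp
    push_cast
    ring
  have hnum : ‖((n - Real.sign l * l : ℝ) : ℂ) + Real.sign l * z‖ ≤ 1 + ‖z‖ := by
    refine (norm_add_le _ _).trans ?_
    rw [norm_mul, Complex.norm_real, Complex.norm_real, Real.norm_eq_abs, Real.norm_eq_abs, habs]
    linarith
  rw [key, norm_div, norm_mul, Complex.norm_real, Real.norm_of_nonneg hn.le]
  calc _ ≤ (1 + ‖z‖) / (n * (n / 2)) := by gcongr
    _ = _ := by field_simp

/-- Existence of the (principal-value) Stieltjes transform of a point measure
`Λ = Σ_{λ∈L} γ_λ δ_λ` satisfying `Λ([0,x+a]) - Λ([-x+b,0]) = O(x/log²x)`. -/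
theorem stieltjes_transform_exists
    (L : Set ℝ) (γ : ℝ → ℝ)
    (hLfin : ∀ a b : ℝ, (L ∩ Set.Icc a b).Finite)
    (hγpos : ∀ l ∈ L, 0 < γ l)
    (hgrowth : ∀ a b : ℝ,
      (fun x : ℝ => (∑' l : ↥(L ∩ Set.Icc 0 (x + a)), γ (l : ℝ))
          - (∑' l : ↥(L ∩ Set.Icc (-x + b) 0), γ (l : ℝ)))
        =O[atTop] (fun x : ℝ => x / (Real.log x) ^ 2)) :
    ∀ z : ℂ, (∀ l ∈ L, z ≠ (l : ℂ)) →
      ∃ S : ℂ, Tendsto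
        (fun c : ℝ => ∑' l : ↥(L ∩ Set.Icc (-c) c),
          ((γ (l : ℝ) : ℂ) / (((l : ℝ) : ℂ) - z)))
        atTop (𝓝 S) := by
  intro z _
  simp only [tsum_inter_Icc_eq_sum hLfin γ] at hgrowth
  simp only [tsum_inter_Icc_eq_sum hLfin (fun l : ℝ => (γ l : ℂ) / ((l : ℂ) - z))]
  set s : ℝ → Finset ℝ := fun c => (hLfin (-c) c).toFinset with hs
  set F : ℝ → ℂ := fun c => ∑ l ∈ s c, (γ l : ℂ) / ((l : ℂ) - z) with hF
  set P : ℝ → ℝ := fun c => ∑ l ∈ (hLfin 0 c).toFinset, γ l with hP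
  set N : ℝ → ℝ := fun c => ∑ l ∈ (hLfin (-c) 0).toFinset, γ l with hN
  set D : ℕ → ℝ := fun n => P n - N n with hD
  set m : ℕ → ℝ := fun n => ∑ l ∈ s (n + 1) \ s n, γ l with hm
  set g : ℕ → ℝ := fun n => (n : ℝ) / Real.log n ^ 2 with hg
  have hs_mono {c d : ℝ} (h : c ≤ d) : s c ⊆ s d :=
    toFinset_inter_Icc_subset hLfin (neg_le_neg h) h
  have hmem {c d l : ℝ} (h : l ∈ s d \ s c) : l ∈ L ∧ c ≤ |l| ∧ |l| ≤ d := by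
    simp only [hs, Finset.mem_sdiff, Finite.mem_toFinset, mem_inter_iff, mem_Icc, ← abs_le,
      not_and, not_le] at h
    exact ⟨h.1.1, (h.2 h.1.1).le, h.1.2⟩
  -- growth of the counting functions along the integers
  have hPN (a b : ℝ) : (fun n : ℕ => P (n + a) - N (n + b)) =O[atTop] g := by
    have := (hgrowth a (-b)).comp_tendsto (tendsto_natCast_atTop_atTop (R := ℝ))
    refine this.congr_left fun n => ?_
    simp only [hP, hN, Function.comp_apply, neg_add]
  have hDg : D =O[atTop] g := by simpa using hPN 0 0
  have hDg' : (fun n => D (n + 1)) =O[atTop] g := by simpa [hD] using hPN 1 1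
  have hmg : m =O[atTop] g := by
    have h : (fun n : ℕ => (P (n + 1) - N (n + 0)) - (P (n + 0) - N (n + 1))) =O[atTop] g :=
      (hPN 1 0).sub (hPN 0 1)
    refine h.congr_left fun n => ?_
    have hn : (n : ℝ) ≤ n + 1 := by linarith
    have := sum_symm_Icc_sub_sum hLfin γ γ γ n.cast_nonneg hn (fun _ _ => rfl) fun _ _ => rfl
    simp only [hm]
    rw [Finset.sum_sdiff_eq_sub (hs_mono hn), this]
    simp only [hP, hN, add_zero]
    ring
  have hDdiff (n : ℕ) : D (n + 1) - D n = ∑ l ∈ s (n + 1) \ s n, Real.sign l * γ l := by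
    have hn : (n : ℝ) ≤ n + 1 := by linarith
    have := sum_symm_Icc_sub_sum hLfin (fun l => Real.sign l * γ l) γ (fun l => -γ l)
      n.cast_nonneg hn (fun l h => by simp [Real.sign_of_pos h])
      (fun l h => by simp [Real.sign_of_neg h])
    rw [Finset.sum_sdiff_eq_sub (hs_mono hn), this]
    simp only [hD, hP, hN, Finset.sum_neg_distrib, Nat.cast_add, Nat.cast_one]
    ring
  have hlarge : ∀ᶠ n : ℕ in atTop, 2 * ‖z‖ ≤ n ∧ (0 : ℝ) < n := by
    filter_upwards [(tendsto_natCast_atTop_atTop (R := ℝ)).eventually_ge_atTop (2 * ‖z‖),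
      (tendsto_natCast_atTop_atTop (R := ℝ)).eventually_gt_atTop 0] with n h1 h2 using ⟨h1, h2⟩
  have hg_div : Tendsto (fun n : ℕ => g n * (n : ℝ)⁻¹) atTop (𝓝 0) := by
    have h : Tendsto (fun n : ℕ => (Real.log n ^ 2)⁻¹) atTop (𝓝 0) :=
      (((tendsto_pow_atTop two_ne_zero).comp Real.tendsto_log_atTop).comp
        (tendsto_natCast_atTop_atTop (R := ℝ))).inv_tendsto_atTop
    refine h.congr' ?_
    filter_upwards [hlarge] with n hn
    have := hn.2.ne'
    simp only [hg]
    field_simp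
  have hg_sum : Summable fun n : ℕ => g n * ((n : ℝ) ^ 2)⁻¹ := by
    refine summable_inv_mul_log_sq.congr_atTop ?_
    filter_upwards [hlarge] with n hn
    have := hn.2.ne'
    simp only [hg]
    field_simp
  -- increments of `F` along the integers, after partial summation, are summable
  have hincr : (fun n : ℕ => F (n + 1) - F n - ((D (n + 1) - D n : ℝ) : ℂ) / (n : ℝ))
      =O[atTop] fun n : ℕ => g n * ((n : ℝ) ^ 2)⁻¹ := by
    refine IsBigO.trans (IsBigO.of_bound (2 * (1 + ‖z‖)) ?_) (hmg.mul (isBigO_refl _ _))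
    filter_upwards [hlarge] with n ⟨hz, hn⟩
    have hn1 : (n : ℝ) ≤ n + 1 := by linarith
    rw [hDdiff, hF]
    simp only
    rw [← Finset.sum_sdiff_eq_sub (hs_mono hn1), Complex.ofReal_sum, Finset.sum_div,
      ← Finset.sum_sub_distrib]
    calc _ ≤ ∑ l ∈ s (n + 1) \ s n, γ l * (2 * (1 + ‖z‖) / (n : ℝ) ^ 2) := by
          refine norm_sum_le_of_le _ fun l hl => ?_
          obtain ⟨hlL, h1, h2⟩ := hmem hl
          have hγ := (hγpos l hlL).le
          have : (γ l : ℂ) / ((l : ℂ) - z) - ((Real.sign l * γ l : ℝ) : ℂ) / (n : ℝ)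
              = γ l * (((l : ℂ) - z)⁻¹ - (Real.sign l : ℂ) / (n : ℝ)) := by
            push_cast; ring
          rw [this, norm_mul, Complex.norm_real, Real.norm_of_nonneg hγ]
          gcongr
          exact norm_inv_ofReal_sub_sub_sign_div_le hn hz h1 h2
      _ = 2 * (1 + ‖z‖) * (m n * ((n : ℝ) ^ 2)⁻¹) := by
          rw [← Finset.sum_mul]; ring
      _ ≤ _ := by gcongr; exact Real.le_norm_self _
  have hpart : (fun n : ℕ => ((D (n + 1) / (n * (n + 1)) : ℝ) : ℂ))
      =O[atTop] fun n : ℕ => g n * ((n : ℝ) ^ 2)⁻¹ := by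
    refine IsBigO.trans (IsBigO.of_bound 1 ?_) (hDg'.mul (isBigO_refl _ _))
    filter_upwards [hlarge] with n ⟨_, hn⟩
    rw [Complex.norm_real, one_mul, div_eq_mul_inv, norm_mul, norm_mul,
      Real.norm_of_nonneg (show (0 : ℝ) ≤ (n * (n + 1) : ℝ)⁻¹ by positivity),
      Real.norm_of_nonneg (show (0 : ℝ) ≤ ((n : ℝ) ^ 2)⁻¹ by positivity)]
    gcongr
    nlinarith
  have hD0 : Tendsto (fun n : ℕ => ((D n * (n : ℝ)⁻¹ : ℝ) : ℂ)) atTop (𝓝 0) := by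
    have h : Tendsto (fun n : ℕ => D n * (n : ℝ)⁻¹) atTop (𝓝 0) :=
      (hDg.mul (isBigO_refl (fun n : ℕ => (n : ℝ)⁻¹) atTop)).trans_tendsto hg_div
    exact_mod_cast (Complex.continuous_ofReal.tendsto 0).comp h
  obtain ⟨S, hS⟩ : ∃ S, Tendsto (fun n : ℕ => F n - ((D n * (n : ℝ)⁻¹ : ℝ) : ℂ)) atTop (𝓝 S) := by
    refine exists_tendsto_of_summable_sub (summable_of_isBigO_nat hg_sum ?_)
    refine (hincr.add hpart).congr' ?_ EventuallyEq.rfl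
    filter_upwards [hlarge] with n ⟨_, hn⟩
    have h1 : ((n : ℝ) : ℂ) ≠ 0 := by exact_mod_cast hn.ne'
    have h2 : (n : ℂ) + 1 ≠ 0 := by exact_mod_cast n.succ_ne_zero
    have h3 : (n : ℂ) ≠ 0 := by simpa using h1
    push_cast
    field_simp
    ring
  have hFnat : Tendsto (fun n : ℕ => F n) atTop (𝓝 S) := by
    simpa using hS.add hD0
  -- passage from integer to real truncations
  have hgap : Tendsto (fun c : ℝ => F c - F ⌊c⌋₊) atTop (𝓝 0) := by
    have hm0 : Tendsto (fun n : ℕ => 2 * (m n * (n : ℝ)⁻¹)) atTop (𝓝 0) := by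
      simpa using ((hmg.mul (isBigO_refl (fun n : ℕ => (n : ℝ)⁻¹) atTop)).trans_tendsto
        hg_div).const_mul 2
    refine squeeze_zero_norm' ?_ (hm0.comp (tendsto_nat_floor_atTop (α := ℝ)))
    filter_upwards [(tendsto_nat_floor_atTop (α := ℝ)).eventually hlarge,
      eventually_ge_atTop 0] with c ⟨hz, hn⟩ hc
    have hfl := Nat.floor_le hc
    simp only [hF, Function.comp_apply]
    rw [← Finset.sum_sdiff_eq_sub (hs_mono hfl)]
    calc _ ≤ ∑ l ∈ s c \ s ⌊c⌋₊, γ l * (2 / (⌊c⌋₊ : ℝ)) := by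
          refine norm_sum_le_of_le _ fun l hl => ?_
          obtain ⟨hlL, h1, _⟩ := hmem hl
          have hd := half_le_norm_ofReal_sub hz h1
          rw [norm_div, Complex.norm_real, Real.norm_of_nonneg (hγpos l hlL).le, div_eq_mul_inv,
            ← inv_div]
          have := (hγpos l hlL).le
          gcongr
      _ ≤ ∑ l ∈ s (⌊c⌋₊ + 1) \ s ⌊c⌋₊, γ l * (2 / (⌊c⌋₊ : ℝ)) := by
          refine Finset.sum_le_sum_of_subset_of_nonneg
            (Finset.sdiff_subset_sdiff (hs_mono (Nat.lt_floor_add_one c).le) subset_rfl)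
            fun l hl _ => ?_
          have := (hγpos l (hmem hl).1).le
          positivity
      _ = _ := by rw [← Finset.sum_mul]; ring
  refine ⟨S, ?_⟩
  simpa using hgap.add (hFnat.comp (tendsto_nat_floor_atTop (α := ℝ)))
end

section
/- Assume that for all a, b ∈ ℝ one has Λ([0, x+a]) − Λ([−x+b, 0]) = O(x/log²x) as x → ∞, and define S_Λ(z) = lim_{c→∞} Σ_{λ ∈ L ∩ [−c,c]} γ_λ/(λ − z) for z ∈ ℂ∖L. Then the derivative of S_Λ is given by S'_Λ(z) = Σ_{λ ∈ L} γ_λ/(λ − z)², where this series converges absolutely and the convergence is uniform on compact subsets of ℂ∖L. -/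
open Filter Set Asymptotics Topology

section LocallyFinite

variable {L : Set ℝ} (hL : ∀ a b : ℝ, (L ∩ Icc a b).Finite)

/-- The points of a locally finite set `L` lying in `[-c, c]`, as a finset of `L`. -/
noncomputable def truncation (c : ℝ) : Finset L :=
  ((hL (-c) c).preimage Subtype.val_injective.injOn : Set.Finite (Subtype.val ⁻¹' _)).toFinset

lemma mem_truncation {c : ℝ} {l : L} : l ∈ truncation hL c ↔ (l : ℝ) ∈ Icc (-c) c := by
  simp [truncation]

lemma truncation_mono : Monotone (truncation hL) := by
  intro c d hcd l hl
  rw [mem_truncation] at hl ⊢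
  exact ⟨by linarith [hl.1], by linarith [hl.2]⟩

lemma tendsto_truncation : Tendsto (truncation hL) atTop atTop :=
  tendsto_atTop_finset_of_monotone (truncation_mono hL) fun l =>
    ⟨|(l : ℝ)|, (mem_truncation hL).2 ⟨neg_abs_le _, le_abs_self _⟩⟩

lemma tsum_inter_Icc_eq_sum_truncation (f : ℝ → ℂ) (c : ℝ) :
    ∑' l : ↥(L ∩ Icc (-c) c), f l = ∑ l ∈ truncation hL c, f l := by
  have h : L ∩ Icc (-c) c = ↑((truncation hL c).map (Function.Embedding.subtype _)) := by
    ext x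
    simp only [Finset.coe_map, mem_image, Finset.mem_coe, mem_truncation]
    constructor
    · rintro ⟨hx, hx'⟩
      exact ⟨⟨x, hx⟩, hx', rfl⟩
    · rintro ⟨l, hl, rfl⟩
      exact ⟨l.2, hl⟩
  rw [h, Finset.tsum_subtype', Finset.sum_map]
  rfl

end LocallyFinite

lemma isClosed_of_finite_inter_Icc {L : Set ℝ} (hL : ∀ a b : ℝ, (L ∩ Icc a b).Finite) :
    IsClosed L := by
  have h : LocallyFinite fun l : L => ({(l : ℝ)} : Set ℝ) := fun x => by
    refine ⟨Icc (x - 1) (x + 1), Icc_mem_nhds (by linarith) (by linarith), ?_⟩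
    refine ((hL (x - 1) (x + 1)).preimage Subtype.val_injective.injOn).subset ?_
    rintro l ⟨y, rfl, hy⟩
    exact ⟨l.2, hy⟩
  simpa using h.isClosed_iUnion fun _ => isClosed_singleton

lemma isClosed_ofReal_image {L : Set ℝ} (hL : ∀ a b : ℝ, (L ∩ Icc a b).Finite) :
    IsClosed ((fun x : ℝ => (x : ℂ)) '' L) :=
  Complex.isometry_ofReal.isClosedEmbedding.isClosedMap _ (isClosed_of_finite_inter_Icc hL)

/-- On a compact set avoiding `L`, the kernel `1 / (l - z) ^ 2` is dominated by a multiple of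
`1 / (l ^ 2 + 1)`, uniformly in `l ∈ L`. -/
lemma exists_sq_add_one_le_mul_norm_sub_sq {L : Set ℝ} (hL : ∀ a b : ℝ, (L ∩ Icc a b).Finite)
    {K : Set ℂ} (hK : IsCompact K) (hKL : ∀ z ∈ K, ∀ l ∈ L, z ≠ (l : ℂ)) :
    ∃ C : ℝ, 0 < C ∧ ∀ z ∈ K, ∀ l ∈ L, l ^ 2 + 1 ≤ C * ‖(l : ℂ) - z‖ ^ 2 := by
  have hdisj : Disjoint K ((fun x : ℝ => (x : ℂ)) '' L) := by
    rw [Set.disjoint_left]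
    rintro z hz ⟨l, hl, rfl⟩
    exact hKL _ hz l hl rfl
  obtain ⟨δ, hδ, hdist⟩ := Metric.exists_pos_forall_lt_edist hK (isClosed_ofReal_image hL) hdisj
  obtain ⟨R, hR⟩ := hK.isBounded.exists_norm_le
  refine ⟨2 + (2 * R ^ 2 + 1) / δ ^ 2, by positivity, fun z hz l hl => ?_⟩
  have hd : (δ : ℝ) ≤ ‖(l : ℂ) - z‖ := by
    have h := hdist z hz _ ⟨l, hl, rfl⟩
    rw [edist_comm, edist_nndist, ENNReal.coe_lt_coe, ← NNReal.coe_lt_coe, coe_nndist,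
      dist_eq_norm] at h
    exact h.le
  have hδ' : (0 : ℝ) < δ := hδ
  have hl_le : |l| ≤ ‖(l : ℂ) - z‖ + R := by
    have h := norm_add_le ((l : ℂ) - z) z
    rw [sub_add_cancel, Complex.norm_real, Real.norm_eq_abs] at h
    linarith [hR z hz]
  have hsq : l ^ 2 ≤ (‖(l : ℂ) - z‖ + R) ^ 2 := sq_le_sq.2 (hl_le.trans (le_abs_self _))
  have hmul : 2 * R ^ 2 + 1 ≤ (2 * R ^ 2 + 1) / (δ : ℝ) ^ 2 * ‖(l : ℂ) - z‖ ^ 2 := by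
    rw [div_mul_eq_mul_div, le_div_iff₀ (by positivity)]
    gcongr
  nlinarith [sq_nonneg (‖(l : ℂ) - z‖ - R)]

/-- Convergence of the symmetric partial sums of the Stieltjes transform at `Complex.I` forces
summability of the Poisson kernel. -/
lemma summable_div_sq_add_one {L : Set ℝ} {γ : ℝ → ℝ} (hL : ∀ a b : ℝ, (L ∩ Icc a b).Finite)
    (hγ : ∀ l ∈ L, 0 < γ l) {w : ℂ}
    (hw : Tendsto (fun c : ℝ => ∑ l ∈ truncation hL c, (γ l : ℂ) / (((l : ℝ) : ℂ) - Complex.I))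
      atTop (𝓝 w)) :
    Summable fun l : L => γ l / ((l : ℝ) ^ 2 + 1) := by
  have hnn : ∀ l : L, 0 ≤ γ l / ((l : ℝ) ^ 2 + 1) := fun l =>
    div_nonneg (hγ l l.2).le (by positivity)
  have hterm : ∀ l : L, ((γ l : ℂ) / (((l : ℝ) : ℂ) - Complex.I)).im =
      γ l / ((l : ℝ) ^ 2 + 1) := fun l => by
    simp [Complex.div_im, Complex.normSq_apply, pow_two, neg_div]
  have him : Tendsto (fun c : ℝ => ∑ l ∈ truncation hL c, γ l / ((l : ℝ) ^ 2 + 1))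
      atTop (𝓝 w.im) := by
    refine ((Complex.continuous_im.tendsto w).comp hw).congr fun c => ?_
    simp only [Function.comp_apply, Complex.im_sum, hterm]
  refine summable_of_sum_le (c := w.im) hnn fun t => ?_
  obtain ⟨c, hc⟩ := ((tendsto_truncation hL).eventually_ge_atTop t).exists
  have hmono : Monotone fun c : ℝ => ∑ l ∈ truncation hL c, γ l / ((l : ℝ) ^ 2 + 1) :=
    fun a b hab => Finset.sum_le_sum_of_subset_of_nonneg (truncation_mono hL hab)
      fun l _ _ => hnn l
  exact (Finset.sum_le_sum_of_subset_of_nonneg hc fun l _ _ => hnn l).trans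
    (hmono.ge_of_tendsto him c)

/-- The derivative of the Stieltjes transform is `S'_Λ(z) = Σ_{λ∈L} γ_λ/(λ-z)²`,
with absolute convergence, and the convergence of the series is uniform on compact
subsets of `ℂ∖L`. -/
theorem stieltjes_transform_derivative
    (L : Set ℝ) (γ : ℝ → ℝ)
    (hLfin : ∀ a b : ℝ, (L ∩ Set.Icc a b).Finite)
    (hγpos : ∀ l ∈ L, 0 < γ l)
    (hgrowth : ∀ a b : ℝ,
      (fun x : ℝ => (∑' l : ↥(L ∩ Set.Icc 0 (x + a)), γ (l : ℝ))
          - (∑' l : ↥(L ∩ Set.Icc (-x + b) 0), γ (l : ℝ)))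
        =O[atTop] (fun x : ℝ => x / (Real.log x) ^ 2))
    (S : ℂ → ℂ)
    (hS : ∀ z : ℂ, (∀ l ∈ L, z ≠ (l : ℂ)) →
      Tendsto
        (fun c : ℝ => ∑' l : ↥(L ∩ Set.Icc (-c) c),
          ((γ (l : ℝ) : ℂ) / (((l : ℝ) : ℂ) - z)))
        atTop (𝓝 (S z))) :
    (∀ z : ℂ, (∀ l ∈ L, z ≠ (l : ℂ)) →
      Summable (fun l : ↥L => ‖(γ (l : ℝ) : ℂ) / (((l : ℝ) : ℂ) - z) ^ 2‖) ∧
      HasDerivAt S (∑' l : ↥L, (γ (l : ℝ) : ℂ) / (((l : ℝ) : ℂ) - z) ^ 2) z)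
    ∧ (∀ K : Set ℂ, IsCompact K → (∀ z ∈ K, ∀ l ∈ L, z ≠ (l : ℂ)) →
      TendstoUniformlyOn
        (fun (s : Finset ↥L) (z : ℂ) =>
          ∑ l ∈ s, (γ (l : ℝ) : ℂ) / (((l : ℝ) : ℂ) - z) ^ 2)
        (fun z => ∑' l : ↥L, (γ (l : ℝ) : ℂ) / (((l : ℝ) : ℂ) - z) ^ 2)
        atTop K) := by
  simp only [fun z : ℂ => tsum_inter_Icc_eq_sum_truncation hLfin
    (fun l : ℝ => (γ l : ℂ) / ((l : ℂ) - z))] at hS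
  have hsum := summable_div_sq_add_one hLfin hγpos
    (hS Complex.I fun l _ h => by simpa using congrArg Complex.im h)
  have hbound : ∀ K : Set ℂ, IsCompact K → (∀ z ∈ K, ∀ l ∈ L, z ≠ (l : ℂ)) →
      ∃ u : L → ℝ, Summable u ∧
        ∀ l : L, ∀ z ∈ K, ‖(γ (l : ℝ) : ℂ) / (((l : ℝ) : ℂ) - z) ^ 2‖ ≤ u l := by
    intro K hK hKL
    obtain ⟨C, hC, hle⟩ := exists_sq_add_one_le_mul_norm_sub_sq hLfin hK hKL
    refine ⟨_, hsum.mul_left C, fun l z hz => ?_⟩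
    have hpos : 0 < ‖((l : ℝ) : ℂ) - z‖ :=
      norm_pos_iff.2 (sub_ne_zero.2 (hKL z hz l l.2).symm)
    have hγl := hγpos l l.2
    rw [norm_div, norm_pow, Complex.norm_real, Real.norm_of_nonneg hγl.le, mul_div_assoc',
      div_le_div_iff₀ (by positivity) (by positivity)]
    nlinarith [mul_le_mul_of_nonneg_left (hle z hz l l.2) hγl.le]
  have hunif : ∀ K : Set ℂ, IsCompact K → (∀ z ∈ K, ∀ l ∈ L, z ≠ (l : ℂ)) →
      TendstoUniformlyOn
        (fun (s : Finset ↥L) (z : ℂ) =>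
          ∑ l ∈ s, (γ (l : ℝ) : ℂ) / (((l : ℝ) : ℂ) - z) ^ 2)
        (fun z => ∑' l : ↥L, (γ (l : ℝ) : ℂ) / (((l : ℝ) : ℂ) - z) ^ 2) atTop K := by
    intro K hK hKL
    obtain ⟨u, hu, hle⟩ := hbound K hK hKL
    exact tendstoUniformlyOn_tsum hu hle
  refine ⟨fun z hz => ⟨?_, ?_⟩, hunif⟩
  · obtain ⟨u, hu, hle⟩ := hbound {z} isCompact_singleton (by simpa using hz)
    exact hu.of_nonneg_of_le (fun _ => norm_nonneg _) fun l => hle l z rfl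
  · have hz' : z ∈ ((fun x : ℝ => (x : ℂ)) '' L)ᶜ := by
      rintro ⟨l, hl, h⟩
      exact hz l hl h.symm
    obtain ⟨ε, hε, hball⟩ := Metric.nhds_basis_closedBall.mem_iff.1
      ((isClosed_ofReal_image hLfin).isOpen_compl.mem_nhds hz')
    have hne : ∀ w ∈ Metric.closedBall z ε, ∀ l ∈ L, w ≠ (l : ℂ) :=
      fun w hw l hl h => hball hw ⟨l, hl, h.symm⟩
    have hderiv : TendstoUniformlyOn
        (fun (c : ℝ) (w : ℂ) =>
          ∑ l ∈ truncation hLfin c, (γ (l : ℝ) : ℂ) / (((l : ℝ) : ℂ) - w) ^ 2)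
        (fun w => ∑' l : ↥L, (γ (l : ℝ) : ℂ) / (((l : ℝ) : ℂ) - w) ^ 2)
        atTop (Metric.ball z ε) := fun u hu =>
      (tendsto_truncation hLfin).eventually
        (((hunif _ (isCompact_closedBall z ε) hne).mono Metric.ball_subset_closedBall) u hu)
    refine hasDerivAt_of_tendstoUniformlyOn Metric.isOpen_ball hderiv
      (Eventually.of_forall fun c w hw => ?_)
      (fun w hw => hS w (hne w (Metric.ball_subset_closedBall hw))) (Metric.mem_ball_self hε)
    refine HasDerivAt.fun_sum fun l _ => ?_
    have h0 : ((l : ℝ) : ℂ) - w ≠ 0 :=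
      sub_ne_zero.2 (hne w (Metric.ball_subset_closedBall hw) l l.2).symm
    simpa using (hasDerivAt_const w (γ (l : ℝ) : ℂ)).fun_div ((hasDerivAt_id w).const_sub _) h0
end

section
/- Assume that for all a, b ∈ ℝ one has Λ([0, x+a]) − Λ([−x+b, 0]) = O(x/log²x) as x → ∞, and define S_Λ(z) = lim_{c→∞} Σ_{λ ∈ L ∩ [−c,c]} γ_λ/(λ − z) for z ∈ ℂ∖L. Then for every pair {λ₁, λ₂} of consecutive points of L with λ₁ < λ₂ (i.e. λ₁, λ₂ ∈ L and L ∩ (λ₁, λ₂) = ∅), the restriction of S_Λ to the open interval (λ₁, λ₂) is a strictly increasing bijection from (λ₁, λ₂) onto ℝ. -/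
open Filter Set Asymptotics Topology

/-- A sum over a finite set, written as a `tsum` over the subtype, is the corresponding
`Finset` sum. -/
lemma tsum_coe_finite {α M : Type*} [AddCommMonoid M] [TopologicalSpace M] {s : Set α}
    (hs : s.Finite) (f : α → M) : ∑' l : s, f l = ∑ l ∈ hs.toFinset, f l := by
  lift s to Finset α using hs
  simp [Finset.sum_attach s f]

lemma exists_lt_le_div {g d : ℝ} (hg : 0 < g) (hd : 0 < d) (M : ℝ) :
    ∃ δ, 0 < δ ∧ δ < d ∧ M ≤ g / δ := by
  have hM : 0 < |M| + 1 := by positivity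
  refine ⟨min (d / 2) (g / (|M| + 1)), by positivity,
    (min_le_left _ _).trans_lt (by linarith), ?_⟩
  rw [le_div_iff₀ (by positivity)]
  calc M * min (d / 2) (g / (|M| + 1))
      ≤ (|M| + 1) * min (d / 2) (g / (|M| + 1)) := by
        gcongr
        linarith [le_abs_self M]
    _ ≤ (|M| + 1) * (g / (|M| + 1)) := by
        gcongr
        exact min_le_right _ _
    _ = g := by field_simp

lemma div_sub_sub_div_sub {g l s t : ℝ} (hs : l - s ≠ 0) (ht : l - t ≠ 0) :
    g / (l - t) - g / (l - s) = g * (t - s) / ((l - t) * (l - s)) := by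
  field_simp
  ring

/-- A simple pole with positive weight increases on any interval avoiding it. -/
lemma div_sub_lt_div_sub {g l p q s t : ℝ} (hg : 0 < g) (hl : l ≤ p ∨ q ≤ l)
    (hs : p < s) (hst : s < t) (ht : t < q) : g / (l - s) < g / (l - t) := by
  have hprod : 0 < (l - t) * (l - s) := by
    rcases hl with hl | hl
    · exact mul_pos_of_neg_of_neg (by linarith) (by linarith)
    · exact mul_pos (by linarith) (by linarith)
  rw [← sub_pos, div_sub_sub_div_sub (right_ne_zero_of_mul hprod.ne')
    (left_ne_zero_of_mul hprod.ne')]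
  exact div_pos (mul_pos hg (sub_pos.2 hst)) hprod

/-- The increments of a simple pole inside `[a, b]` are controlled by its increment over `[a, b]`,
uniformly in poles outside a larger interval `(p, q)`. -/
lemma div_sub_sub_div_sub_le {g l p q a b s t : ℝ} (hg : 0 < g) (hl : l ≤ p ∨ q ≤ l)
    (hpa : p < a) (hab : a < b) (hbq : b < q) (has : a ≤ s) (hst : s ≤ t) (htb : t ≤ b) :
    g / (l - t) - g / (l - s) ≤
      ((b - p) / (a - p) + (q - a) / (q - b)) / (b - a) * (t - s)
        * (g / (l - b) - g / (l - a)) := by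
  set K := (b - p) / (a - p) + (q - a) / (q - b) with hK
  have hap : 0 < a - p := sub_pos.2 hpa
  have hqb : 0 < q - b := sub_pos.2 hbq
  have hK₁ : (b - p) / (a - p) ≤ K := le_add_of_nonneg_right (div_nonneg (by linarith) hqb.le)
  have hK₂ : (q - a) / (q - b) ≤ K := le_add_of_nonneg_left (div_nonneg (by linarith) hap.le)
  have key : 0 < (l - t) * (l - s) ∧ 0 < (l - b) * (l - a) ∧
      (l - b) * (l - a) ≤ K * ((l - t) * (l - s)) := by
    rcases hl with hl | hl
    · have hpos : 0 < (l - t) * (l - s) := mul_pos_of_neg_of_neg (by linarith) (by linarith)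
      refine ⟨hpos, mul_pos_of_neg_of_neg (by linarith) (by linarith), ?_⟩
      refine le_trans ?_ (mul_le_mul_of_nonneg_right hK₁ hpos.le)
      rw [div_mul_eq_mul_div, le_div_iff₀ hap]
      have h₁ : (b - l) * (a - p) ≤ (b - p) * (a - l) := by nlinarith
      have h₂ : (a - l) * (a - l) ≤ (t - l) * (s - l) :=
        mul_le_mul (by linarith) (by linarith) (by linarith) (by linarith)
      nlinarith [mul_le_mul_of_nonneg_right h₁ (by linarith : 0 ≤ a - l),
        mul_le_mul_of_nonneg_left h₂ (by linarith : 0 ≤ b - p)]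
    · have hpos : 0 < (l - t) * (l - s) := mul_pos (by linarith) (by linarith)
      refine ⟨hpos, mul_pos (by linarith) (by linarith), ?_⟩
      refine le_trans ?_ (mul_le_mul_of_nonneg_right hK₂ hpos.le)
      rw [div_mul_eq_mul_div, le_div_iff₀ hqb]
      have h₁ : (l - a) * (q - b) ≤ (q - a) * (l - b) := by nlinarith
      have h₂ : (l - b) * (l - b) ≤ (l - t) * (l - s) :=
        mul_le_mul (by linarith) (by linarith) (by linarith) (by linarith)
      nlinarith [mul_le_mul_of_nonneg_right h₁ (by linarith : 0 ≤ l - b),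
        mul_le_mul_of_nonneg_left h₂ (by linarith : 0 ≤ q - a)]
  obtain ⟨hts, hba, hle⟩ := key
  rw [div_sub_sub_div_sub (right_ne_zero_of_mul hts.ne') (left_ne_zero_of_mul hts.ne'),
    div_sub_sub_div_sub (right_ne_zero_of_mul hba.ne') (left_ne_zero_of_mul hba.ne')]
  have hb : b - a ≠ 0 := (sub_pos.2 hab).ne'
  have hrw : K / (b - a) * (t - s) * (g * (b - a) / ((l - b) * (l - a))) =
      g * (t - s) * (K / ((l - b) * (l - a))) := by
    generalize (l - b) * (l - a) = D
    field_simp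
  rw [hrw, div_eq_mul_inv]
  refine mul_le_mul_of_nonneg_left ?_ (mul_nonneg hg.le (sub_nonneg.2 hst))
  rwa [inv_eq_one_div, div_le_div_iff₀ hts hba, one_mul]

/-- The symmetric limit of real pole sums, on an interval between two consecutive poles, is a
strictly increasing bijection onto `ℝ`. -/
lemma strictMonoOn_bijOn_of_tendsto_sum_div_sub {L : Set ℝ} {γ f : ℝ → ℝ} {p q : ℝ}
    (hLfin : ∀ a b : ℝ, (L ∩ Icc a b).Finite) (hγpos : ∀ l ∈ L, 0 < γ l)
    (hp : p ∈ L) (hq : q ∈ L) (hpq : p < q) (hgap : L ∩ Ioo p q = ∅)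
    (hf : ∀ t ∈ Ioo p q, Tendsto
      (fun c : ℝ => ∑ l ∈ (hLfin (-c) c).toFinset, γ l / (l - t)) atTop (𝓝 (f t))) :
    StrictMonoOn f (Ioo p q) ∧ BijOn f (Ioo p q) univ := by
  have hout : ∀ l ∈ L, l ≤ p ∨ q ≤ l := by
    intro l hl
    by_contra! h
    exact (hgap.subset ⟨hl, h⟩ : l ∈ (∅ : Set ℝ))
  have lower : ∀ i ∈ L, ∀ s t, p < s → s < t → t < q →
      γ i / (i - t) - γ i / (i - s) ≤ f t - f s := by
    intro i hi s t hs hst ht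
    refine ge_of_tendsto ((hf t ⟨hs.trans hst, ht⟩).sub (hf s ⟨hs, hst.trans ht⟩)) ?_
    filter_upwards [eventually_ge_atTop |i|] with c hc
    rw [← Finset.sum_sub_distrib]
    refine Finset.single_le_sum (f := fun l => γ l / (l - t) - γ l / (l - s)) ?_ ?_
    · intro l hl
      have hlL : l ∈ L := ((hLfin (-c) c).mem_toFinset.1 hl).1
      exact sub_nonneg.2 (div_sub_lt_div_sub (hγpos l hlL) (hout l hlL) hs hst ht).le
    · exact (hLfin (-c) c).mem_toFinset.2 ⟨hi, abs_le.1 hc⟩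
  have hmono : StrictMonoOn f (Ioo p q) := by
    intro s hs t ht hst
    have h := lower p hp s t hs.1 hst ht.2
    have := div_sub_lt_div_sub (hγpos p hp) (hout p hp) hs.1 hst ht.2
    linarith
  have hcont : ∀ a b, p < a → a < b → b < q → ContinuousOn f (Icc a b) := by
    intro a b hpa hab hbq
    set C := ((b - p) / (a - p) + (q - a) / (q - b)) / (b - a)
    have upper : ∀ s t, a ≤ s → s ≤ t → t ≤ b →
        f t - f s ≤ C * (t - s) * (f b - f a) := by
      intro s t has hst htb
      refine le_of_tendsto_of_tendsto'
        ((hf t ⟨by linarith, by linarith⟩).sub (hf s ⟨by linarith, by linarith⟩))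
        (((hf b ⟨by linarith, hbq⟩).sub (hf a ⟨hpa, by linarith⟩)).const_mul (C * (t - s)))
        fun c => ?_
      rw [← Finset.sum_sub_distrib, ← Finset.sum_sub_distrib, Finset.mul_sum]
      refine Finset.sum_le_sum fun l hl => ?_
      have hlL : l ∈ L := ((hLfin (-c) c).mem_toFinset.1 hl).1
      exact div_sub_sub_div_sub_le (hγpos l hlL) (hout l hlL) hpa hab hbq has hst htb
    refine (LipschitzOnWith.of_le_add_mul (C * (f b - f a)).toNNReal
      fun x hx y hy => ?_).continuousOn
    have hC : C * (f b - f a) ≤ ((C * (f b - f a)).toNNReal : ℝ) := Real.le_coe_toNNReal _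
    rcases le_total x y with hxy | hxy
    · have := hmono.monotoneOn ⟨by linarith [hx.1], by linarith [hx.2]⟩
        ⟨by linarith [hy.1], by linarith [hy.2]⟩ hxy
      have : 0 ≤ ((C * (f b - f a)).toNNReal : ℝ) * dist x y := by positivity
      linarith
    · have h := upper y x hy.1 hxy hx.2
      rw [Real.dist_eq, abs_of_nonneg (sub_nonneg.2 hxy)]
      nlinarith [mul_le_mul_of_nonneg_right hC (sub_nonneg.2 hxy)]
  refine ⟨hmono, fun _ _ => mem_univ _, hmono.injOn, fun y _ => ?_⟩
  obtain ⟨m, hpm, hmq⟩ := exists_between hpq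
  obtain ⟨δ, hδ, hδm, hδM⟩ := exists_lt_le_div (hγpos p hp) (sub_pos.2 hpm)
    (f m - γ p / (p - m) - y)
  obtain ⟨ε, hε, hεm, hεM⟩ := exists_lt_le_div (hγpos q hq) (sub_pos.2 hmq)
    (y - f m + γ q / (q - m))
  have ha := lower p hp (p + δ) m (by linarith) (by linarith) hmq
  have hb := lower q hq m (q - ε) hpm (by linarith) (by linarith)
  rw [sub_add_cancel_left, div_neg] at ha
  rw [sub_sub_cancel] at hb
  obtain ⟨x, hx, hxy⟩ := intermediate_value_Icc (by linarith : p + δ ≤ q - ε)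
    (hcont (p + δ) (q - ε) (by linarith) (by linarith) (by linarith))
    (⟨by linarith, by linarith⟩ : y ∈ Icc (f (p + δ)) (f (q - ε)))
  exact ⟨x, ⟨by linarith [hx.1], by linarith [hx.2]⟩, hxy⟩

/-- Between two consecutive points `λ₁ < λ₂` of `L`, the Stieltjes transform `S_Λ`
is real-valued and is a strictly increasing bijection from `(λ₁, λ₂)` onto `ℝ`. -/
theorem stieltjes_transform_strictMono_bijection
    (L : Set ℝ) (γ : ℝ → ℝ)
    (hLfin : ∀ a b : ℝ, (L ∩ Set.Icc a b).Finite)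
    (hγpos : ∀ l ∈ L, 0 < γ l)
    (hgrowth : ∀ a b : ℝ,
      (fun x : ℝ => (∑' l : ↥(L ∩ Set.Icc 0 (x + a)), γ (l : ℝ))
          - (∑' l : ↥(L ∩ Set.Icc (-x + b) 0), γ (l : ℝ)))
        =O[atTop] (fun x : ℝ => x / (Real.log x) ^ 2))
    (S : ℂ → ℂ)
    (hS : ∀ z : ℂ, (∀ l ∈ L, z ≠ (l : ℂ)) →
      Tendsto
        (fun c : ℝ => ∑' l : ↥(L ∩ Set.Icc (-c) c),
          ((γ (l : ℝ) : ℂ) / (((l : ℝ) : ℂ) - z)))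
        atTop (𝓝 (S z))) :
    ∀ lam₁ lam₂ : ℝ, lam₁ ∈ L → lam₂ ∈ L → lam₁ < lam₂ →
      L ∩ Set.Ioo lam₁ lam₂ = ∅ →
      (∀ t ∈ Set.Ioo lam₁ lam₂, (S (t : ℂ)).im = 0)
      ∧ StrictMonoOn (fun t : ℝ => (S (t : ℂ)).re) (Set.Ioo lam₁ lam₂)
      ∧ Set.BijOn (fun t : ℝ => (S (t : ℂ)).re) (Set.Ioo lam₁ lam₂) Set.univ := by
  intro lam₁ lam₂ h₁ h₂ hlt hgap
  have htend : ∀ t ∈ Ioo lam₁ lam₂, Tendsto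
      (fun c : ℝ => ((∑ l ∈ (hLfin (-c) c).toFinset, γ l / (l - t) : ℝ) : ℂ))
      atTop (𝓝 (S (t : ℂ))) := by
    intro t ht
    refine (hS t fun l hl h => ?_).congr fun c => ?_
    · have htl : t = l := by exact_mod_cast h
      exact (hgap.subset ⟨htl ▸ hl, ht⟩ : t ∈ (∅ : Set ℝ))
    · rw [tsum_coe_finite (hLfin (-c) c) fun l : ℝ => (γ l : ℂ) / ((l : ℂ) - t)]
      push_cast
      rfl
  refine ⟨fun t ht => ?_, strictMonoOn_bijOn_of_tendsto_sum_div_sub hLfin hγpos h₁ h₂ hlt hgap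
    fun t ht => ?_⟩
  · have him := (Complex.continuous_im.tendsto _).comp (htend t ht)
    refine tendsto_nhds_unique him (tendsto_const_nhds.congr fun c => ?_)
    exact (Complex.ofReal_im _).symm
  · refine ((Complex.continuous_re.tendsto _).comp (htend t ht)).congr fun c => ?_
    exact Complex.ofReal_re _
end

section
/- Let Λ = Σ_{j∈ℤ} γ_j δ_{λ_j}, where (λ_j)_{j∈ℤ} is a strictly increasing sequence of real numbers that is neither bounded from above nor from below, γ_j > 0 for all j, and L = {λ_j : j ∈ ℤ}. Assume that for some c > 0, Σ_{j=0}^{k} γ_j = ck + O(k/log²k) and Σ_{j=0}^{k} γ_{−j} = ck + O(k/log²k) as k → ∞. Assume further that Card(L ∩ [0,x]) = O(x) as x → ∞ and that for all a, b ∈ ℝ, Card(L ∩ [0, x+a]) − Card(L ∩ [−x+b, 0]) = O(x/log²x) as x → ∞. Then for all a, b ∈ ℝ, Λ([0, x+a]) − Λ([−x+b, 0]) = O(x/log²x) as x → ∞. -/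
open Filter Set Asymptotics Topology

/-- `x / log² x` is nondecreasing on `[e², ∞)`. -/
lemma div_log_sq_le_div_log_sq {u w : ℝ} (hu : Real.exp 2 ≤ u) (huw : u ≤ w) :
    u / Real.log u ^ 2 ≤ w / Real.log w ^ 2 := by
  have hanti := Real.log_div_sqrt_antitoneOn (show u ∈ {x | Real.exp 2 ≤ x} from hu)
    (show w ∈ {x | Real.exp 2 ≤ x} from hu.trans huw) huw
  have hu0 : 0 < u := (Real.exp_pos 2).trans_le hu
  have hw0 : 0 < w := hu0.trans_le huw
  have hlogw : 2 ≤ Real.log w := (Real.le_log_iff_exp_le hw0).2 (hu.trans huw)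
  have hpos : 0 < Real.log w / √w := div_pos (by linarith) (Real.sqrt_pos.2 hw0)
  have hsq := pow_le_pow_left₀ hpos.le hanti 2
  have hinv := inv_anti₀ (pow_pos hpos 2) hsq
  simpa [div_pow, Real.sq_sqrt hu0.le, Real.sq_sqrt hw0.le] using hinv

/-- The gauge `x / log² x` preserves domination between functions tending to infinity. -/
lemma isBigO_div_log_sq_of_isBigO {α : Type*} {l : Filter α} {u v : α → ℝ}
    (hu : Tendsto u l atTop) (hv : Tendsto v l atTop) (huv : u =O[l] v) :
    (fun t => u t / Real.log (u t) ^ 2) =O[l] (fun t => v t / Real.log (v t) ^ 2) := by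
  obtain ⟨K, hK⟩ := huv.bound
  refine IsBigO.of_bound (max K 1) ?_
  filter_upwards [hK, hu.eventually_ge_atTop (Real.exp 2), hv.eventually_ge_atTop (Real.exp 2)]
    with t hKt hut hvt
  have hu0 : 0 < u t := (Real.exp_pos 2).trans_le hut
  have hv0 : 0 < v t := (Real.exp_pos 2).trans_le hvt
  have hM : (1 : ℝ) ≤ max K 1 := le_max_right _ _
  rw [Real.norm_of_nonneg hu0.le, Real.norm_of_nonneg hv0.le] at hKt
  have hle : u t ≤ max K 1 * v t :=
    hKt.trans (mul_le_mul_of_nonneg_right (le_max_left _ _) hv0.le)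
  have hvM : v t ≤ max K 1 * v t := le_mul_of_one_le_left hv0.le hM
  have hlogv : 2 ≤ Real.log (v t) := (Real.le_log_iff_exp_le hv0).2 hvt
  have hlog : Real.log (v t) ≤ Real.log (max K 1 * v t) := Real.log_le_log hv0 hvM
  rw [Real.norm_of_nonneg (by positivity), Real.norm_of_nonneg (by positivity)]
  calc u t / Real.log (u t) ^ 2
      ≤ max K 1 * v t / Real.log (max K 1 * v t) ^ 2 := div_log_sq_le_div_log_sq hut hle
    _ ≤ max K 1 * v t / Real.log (v t) ^ 2 := by gcongr
    _ = max K 1 * (v t / Real.log (v t) ^ 2) := mul_div_assoc _ _ _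

lemma isBigO_div_log_sq_id :
    (fun x : ℝ => x / Real.log x ^ 2) =O[atTop] (fun x : ℝ => x) := by
  refine IsBigO.of_bound 1 ?_
  filter_upwards [Real.tendsto_log_atTop.eventually_ge_atTop 1, eventually_ge_atTop 0] with x hx h0
  rw [Real.norm_of_nonneg (by positivity), Real.norm_of_nonneg h0, one_mul]
  exact div_le_self h0 (one_le_pow₀ hx)

lemma const_isBigO_div_log_sq (C : ℝ) :
    (fun _ : ℝ => C) =O[atTop] (fun x : ℝ => x / Real.log x ^ 2) := by
  refine IsBigO.of_bound |C| ?_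
  filter_upwards [(Real.isLittleO_pow_log_id_atTop (n := 2)).bound one_pos,
    Real.tendsto_log_atTop.eventually_ge_atTop 1, eventually_ge_atTop 0] with x hx hlog h0
  have hpos : 0 < Real.log x ^ 2 := by positivity
  rw [one_mul, Real.norm_of_nonneg hpos.le, id, Real.norm_of_nonneg h0] at hx
  rw [Real.norm_of_nonneg (by positivity : 0 ≤ x / Real.log x ^ 2), Real.norm_eq_abs]
  exact le_mul_of_one_le_right (abs_nonneg _) ((one_le_div hpos).2 hx)

/-- The asymptotics of the partial sums of `γ` do not depend on the starting index. -/
lemma isBigO_sum_range_shift_iff (γ : ℤ → ℝ) (c : ℝ) (p : ℤ) :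
    (fun m : ℕ => (∑ i ∈ Finset.range m, γ (p + 1 + i)) - c * m)
        =O[atTop] (fun m : ℕ => (m : ℝ) / Real.log m ^ 2) ↔
      (fun m : ℕ => (∑ i ∈ Finset.range m, γ (p + i)) - c * m)
        =O[atTop] (fun m : ℕ => (m : ℝ) / Real.log m ^ 2) := by
  have hcast : Tendsto (fun m : ℕ => (m : ℝ)) atTop atTop := tendsto_natCast_atTop_atTop
  have hcast' : Tendsto (fun m : ℕ => ((m + 1 : ℕ) : ℝ)) atTop atTop :=
    hcast.comp (tendsto_add_atTop_nat 1)
  have hup : (fun m : ℕ => (m : ℝ) / Real.log m ^ 2)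
      =O[atTop] (fun m : ℕ => ((m + 1 : ℕ) : ℝ) / Real.log ((m + 1 : ℕ) : ℝ) ^ 2) := by
    refine isBigO_div_log_sq_of_isBigO hcast hcast' (IsBigO.of_bound 1 (Eventually.of_forall ?_))
    intro m
    rw [Real.norm_natCast, Real.norm_natCast, one_mul]
    exact_mod_cast m.le_succ
  have hdown : (fun m : ℕ => ((m + 1 : ℕ) : ℝ) / Real.log ((m + 1 : ℕ) : ℝ) ^ 2)
      =O[atTop] (fun m : ℕ => (m : ℝ) / Real.log m ^ 2) := by
    refine isBigO_div_log_sq_of_isBigO hcast' hcast (IsBigO.of_bound 2 ?_)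
    filter_upwards [eventually_ge_atTop 1] with m hm
    rw [Real.norm_natCast, Real.norm_natCast]
    exact_mod_cast (by omega : m + 1 ≤ 2 * m)
  have hconst (C : ℝ) : (fun _ : ℕ => C) =O[atTop] (fun m : ℕ => (m : ℝ) / Real.log m ^ 2) :=
    (const_isBigO_div_log_sq C).comp_tendsto hcast
  have hsucc (m : ℕ) : (∑ i ∈ Finset.range (m + 1), γ (p + i)) - c * ((m + 1 : ℕ) : ℝ) =
      ((∑ i ∈ Finset.range m, γ (p + 1 + i)) - c * m) + (γ p - c) := by
    rw [Finset.sum_range_succ']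
    have hterm (i : ℕ) : p + ((i + 1 : ℕ) : ℤ) = p + 1 + i := by push_cast; ring
    simp only [hterm]
    push_cast
    simp only [add_zero]
    ring
  constructor
  · intro h
    rw [← map_add_atTop_eq_nat 1, isBigO_map]
    refine ((h.add (hconst (γ p - c))).trans hup).congr_left fun m => ?_
    simp only [Function.comp_apply, hsucc]
  · intro h
    have h1 := (h.comp_tendsto (tendsto_add_atTop_nat 1)).trans hdown
    refine (h1.sub (hconst (γ p - c))).congr_left fun m => ?_
    simp only [Function.comp_apply, hsucc, add_sub_cancel_right]

lemma isBigO_sum_range_of_start_zero (γ : ℤ → ℝ) (c : ℝ)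
    (h : (fun k : ℕ => (∑ j ∈ Finset.range (k + 1), γ (j : ℤ)) - c * (k : ℝ))
      =O[atTop] (fun k : ℕ => (k : ℝ) / (Real.log (k : ℝ)) ^ 2)) (p : ℤ) :
    (fun m : ℕ => (∑ i ∈ Finset.range m, γ (p + i)) - c * m)
        =O[atTop] (fun m : ℕ => (m : ℝ) / Real.log m ^ 2) := by
  have h1 : (fun m : ℕ => (∑ i ∈ Finset.range m, γ (0 + 1 + i)) - c * m)
        =O[atTop] (fun m : ℕ => (m : ℝ) / Real.log m ^ 2) := by
    have hconst := (const_isBigO_div_log_sq (γ 0)).comp_tendsto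
      (tendsto_natCast_atTop_atTop (R := ℝ))
    refine (h.sub hconst).congr_left fun m => ?_
    rw [Finset.sum_range_succ']
    have hterm (i : ℕ) : ((i + 1 : ℕ) : ℤ) = 0 + 1 + i := by push_cast; ring
    simp only [hterm, Function.comp_apply, Nat.cast_zero]
    ring
  induction p with
  | zero => exact (isBigO_sum_range_shift_iff γ c 0).1 h1
  | succ n ih => exact (isBigO_sum_range_shift_iff γ c n).2 ih
  | pred n ih =>
    refine (isBigO_sum_range_shift_iff γ c (-(n : ℤ) - 1)).1 ?_
    simpa only [sub_add_cancel] using ih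

/-- The points of a two-sided unbounded increasing sequence lying in `[0, y]` are those with
index in an integer interval whose left endpoint does not depend on `y`. -/
lemma exists_preimage_Icc_zero_eq {lam : ℤ → ℝ} (hmono : StrictMono lam)
    (hub : ¬ BddAbove (range lam)) (hlb : ¬ BddBelow (range lam)) :
    ∃ p : ℤ, ∀ y : ℝ, ∃ N : ℤ, (∀ j, lam j ≤ y ↔ j ≤ N) ∧ lam ⁻¹' Icc 0 y = Finset.Icc p N := by
  have habove (y : ℝ) : ∃ j, y < lam j := by
    simpa [not_bddAbove_iff] using not_bddAbove_iff.1 hub y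
  have hbelow (y : ℝ) : ∃ j, lam j < y := by
    simpa [not_bddBelow_iff] using not_bddBelow_iff.1 hlb y
  have hN (y : ℝ) : ∃ N : ℤ, ∀ j, lam j ≤ y ↔ j ≤ N := by
    obtain ⟨J, hJ⟩ := habove y
    obtain ⟨J', hJ'⟩ := hbelow y
    obtain ⟨N, hN, hmax⟩ := Int.exists_greatest_of_bdd (P := fun j => lam j ≤ y)
      ⟨J, fun j hj => (hmono.lt_iff_lt.1 (hj.trans_lt hJ)).le⟩ ⟨J', hJ'.le⟩
    exact ⟨N, fun j => ⟨hmax j, fun hj => (hmono.monotone hj).trans hN⟩⟩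
  obtain ⟨J, hJ⟩ := habove 0
  obtain ⟨J', hJ'⟩ := hbelow 0
  obtain ⟨p, hp, hmin⟩ := Int.exists_least_of_bdd (P := fun j => 0 ≤ lam j)
    ⟨J', fun j hj => (hmono.lt_iff_lt.1 (hJ'.trans_le hj)).le⟩ ⟨J, hJ.le⟩
  refine ⟨p, fun y => ?_⟩
  obtain ⟨N, hN⟩ := hN y
  refine ⟨N, hN, ?_⟩
  ext j
  have hpj : 0 ≤ lam j ↔ p ≤ j := ⟨hmin j, fun hj => hp.trans (hmono.monotone hj)⟩
  simp [hN, hpj]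

lemma sum_Icc_int_eq_sum_range (γ : ℤ → ℝ) (p N : ℤ) :
    ∑ j ∈ Finset.Icc p N, γ j = ∑ i ∈ Finset.range (Finset.Icc p N).card, γ (p + i) := by
  refine (Finset.sum_nbij (fun i : ℕ => p + i) ?_ ?_ ?_ fun _ _ => rfl).symm
  · intro i hi
    simp only [Int.card_Icc, Finset.mem_range, Finset.mem_Icc] at hi ⊢
    omega
  · intro i _ j _ hij
    simpa using hij
  · intro j hj
    simp only [Finset.coe_Icc, mem_Icc] at hj
    refine ⟨(j - p).toNat, ?_, ?_⟩
    · simp only [Int.card_Icc, Finset.coe_range, mem_Iio]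
      omega
    · change p + ((j - p).toNat : ℤ) = j
      omega

/-- The mass of `[0, y]` is a function of the number of atoms in `[0, y]`, with the same
asymptotics as the partial sums of the weights; that number tends to infinity. -/
lemma exists_mass_Icc_zero_eq_comp_card {lam γ : ℤ → ℝ} {c : ℝ} (hmono : StrictMono lam)
    (hub : ¬ BddAbove (range lam)) (hlb : ¬ BddBelow (range lam))
    (hsum : (fun k : ℕ => (∑ j ∈ Finset.range (k + 1), γ (j : ℤ)) - c * (k : ℝ))
      =O[atTop] (fun k : ℕ => (k : ℝ) / (Real.log (k : ℝ)) ^ 2)) :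
    ∃ A : ℕ → ℝ,
      ((fun m : ℕ => A m - c * m) =O[atTop] (fun m : ℕ => (m : ℝ) / Real.log m ^ 2)) ∧
      (∀ y : ℝ, ∑' j : {j : ℤ // lam j ∈ Icc 0 y}, γ j = A (Nat.card ↥(range lam ∩ Icc 0 y))) ∧
      Tendsto (fun y : ℝ => Nat.card ↥(range lam ∩ Icc 0 y)) atTop atTop := by
  obtain ⟨p, hp⟩ := exists_preimage_Icc_zero_eq hmono hub hlb
  choose N hN hpre using hp
  have hcard (y : ℝ) : Nat.card ↥(range lam ∩ Icc 0 y) = (Finset.Icc p (N y)).card := by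
    rw [inter_comm, ← image_preimage_eq_inter_range, hpre,
      Nat.card_image_of_injective hmono.injective]
    simp
  refine ⟨fun m => ∑ i ∈ Finset.range m, γ (p + i),
    isBigO_sum_range_of_start_zero γ c hsum p, fun y => ?_, ?_⟩
  · change ∑' j : ↥(lam ⁻¹' Icc 0 y), γ j = _
    rw [hcard]
    beta_reduce
    rw [← sum_Icc_int_eq_sum_range, hpre]
    exact Finset.tsum_subtype _ _
  · refine tendsto_atTop.2 fun k => ?_
    filter_upwards [eventually_ge_atTop (lam (p + k))] with y hy
    have := (hN y _).1 hy
    rw [hcard, Int.card_Icc]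
    omega

/-- Along counts `n x = O(x)` tending to infinity, `A (n x)` equals `c * n x` up to
`O(x / log² x)`. -/
lemma isBigO_comp_sub_const_mul {A : ℕ → ℝ} {c : ℝ} {n : ℝ → ℕ}
    (hA : (fun m : ℕ => A m - c * m) =O[atTop] (fun m : ℕ => (m : ℝ) / Real.log m ^ 2))
    (hn : Tendsto n atTop atTop) (hnx : (fun x => (n x : ℝ)) =O[atTop] (fun x : ℝ => x)) :
    (fun x => A (n x) - c * n x) =O[atTop] (fun x : ℝ => x / Real.log x ^ 2) :=
  (hA.comp_tendsto hn).trans <|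
    isBigO_div_log_sq_of_isBigO (tendsto_natCast_atTop_atTop.comp hn) tendsto_id hnx

/-- Sufficient condition for the growth assumption on `Λ = Σ_j γ_j δ_{λ_j}`:
if the partial sums of the weights are `ck + O(k/log²k)` on both sides, the counting
of `L = {λ_j}` is `O(x)` and the centered counting differences are `O(x/log²x)`,
then `Λ([0,x+a]) - Λ([-x+b,0]) = O(x/log²x)` for all `a, b`. -/
theorem growth_condition_from_counting
    (lam : ℤ → ℝ) (γ : ℤ → ℝ) (c : ℝ) (hc : 0 < c)
    (hmono : StrictMono lam)
    (hub : ¬ BddAbove (Set.range lam)) (hlb : ¬ BddBelow (Set.range lam))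
    (hγpos : ∀ j, 0 < γ j)
    (hsum1 : (fun k : ℕ => (∑ j ∈ Finset.range (k + 1), γ (j : ℤ)) - c * (k : ℝ))
      =O[atTop] (fun k : ℕ => (k : ℝ) / (Real.log (k : ℝ)) ^ 2))
    (hsum2 : (fun k : ℕ => (∑ j ∈ Finset.range (k + 1), γ (-(j : ℤ))) - c * (k : ℝ))
      =O[atTop] (fun k : ℕ => (k : ℝ) / (Real.log (k : ℝ)) ^ 2))
    (hcard1 : (fun x : ℝ => (Nat.card ↥(Set.range lam ∩ Set.Icc 0 x) : ℝ))
      =O[atTop] (fun x : ℝ => x))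
    (hcard2 : ∀ a b : ℝ,
      (fun x : ℝ => (Nat.card ↥(Set.range lam ∩ Set.Icc 0 (x + a)) : ℝ)
          - (Nat.card ↥(Set.range lam ∩ Set.Icc (-x + b) 0) : ℝ))
        =O[atTop] (fun x : ℝ => x / (Real.log x) ^ 2)) :
    ∀ a b : ℝ,
      (fun x : ℝ => (∑' j : {j : ℤ // lam j ∈ Set.Icc 0 (x + a)}, γ (j : ℤ))
          - (∑' j : {j : ℤ // lam j ∈ Set.Icc (-x + b) 0}, γ (j : ℤ)))
        =O[atTop] (fun x : ℝ => x / (Real.log x) ^ 2) := by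
  intro a b
  obtain ⟨A, hA, hmassA, hcardA⟩ := exists_mass_Icc_zero_eq_comp_card hmono hub hlb hsum1
  have hmono' : StrictMono fun j : ℤ => -lam (-j) := fun i j hij =>
    neg_lt_neg (hmono (neg_lt_neg hij))
  have hrange : range (fun j : ℤ => -lam (-j)) = -range lam := by
    ext x
    simp only [mem_range, Set.mem_neg]
    exact ⟨fun ⟨j, hj⟩ => ⟨-j, by linarith⟩, fun ⟨j, hj⟩ => ⟨-j, by simp [hj]⟩⟩
  obtain ⟨B, hB, hmassB, hcardB⟩ := exists_mass_Icc_zero_eq_comp_card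
    (γ := fun j => γ (-j)) hmono' (by rwa [hrange, bddAbove_neg]) (by rwa [hrange, bddBelow_neg])
    hsum2
  have hcard_neg (y : ℝ) : Nat.card ↥(range (fun j : ℤ => -lam (-j)) ∩ Icc 0 y) =
      Nat.card ↥(range lam ∩ Icc (-y) 0) := by
    have himage : range (fun j : ℤ => -lam (-j)) ∩ Icc 0 y = -(range lam ∩ Icc (-y) 0) := by
      rw [hrange, Set.inter_neg, Set.neg_Icc, neg_zero, neg_neg]
    rw [himage, ← Set.image_neg_eq_neg, Nat.card_image_of_injective neg_injective]
  have hmass_neg (y : ℝ) : ∑' j : {j : ℤ // lam j ∈ Icc (-y) 0}, γ j =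
      B (Nat.card ↥(range lam ∩ Icc (-y) 0)) := by
    rw [← hcard_neg, ← hmassB]
    refine (((Equiv.neg ℤ).subtypeEquiv fun j => ?_).tsum_eq
      (fun j : {j : ℤ // lam j ∈ Icc (-y) 0} => γ j)).symm
    simp only [mem_Icc, Equiv.neg_apply]
    constructor <;> rintro ⟨h1, h2⟩ <;> constructor <;> linarith
  simp only [hcard_neg] at hcardB
  have hend (x : ℝ) : -x + b = -(x - b) := by ring
  have hmass_left (x : ℝ) : ∑' j : {j : ℤ // lam j ∈ Icc (-x + b) 0}, γ j =
      B (Nat.card ↥(range lam ∩ Icc (-x + b) 0)) := by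
    rw [hend, hmass_neg]
  have hcardAB := hcard2 a b
  simp only [hmassA, hmass_left]
  simp only [hend] at hcardAB ⊢
  have htA : Tendsto (fun x : ℝ => x + a) atTop atTop := tendsto_atTop_add_const_right _ _ tendsto_id
  have htB : Tendsto (fun x : ℝ => x - b) atTop atTop := by
    simpa only [sub_eq_add_neg, id] using tendsto_atTop_add_const_right _ (-b) tendsto_id
  have hlinA : (fun x : ℝ => (Nat.card ↥(range lam ∩ Icc 0 (x + a)) : ℝ))
      =O[atTop] (fun x : ℝ => x) :=
    (hcard1.comp_tendsto htA).trans <|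
      (isBigO_refl _ _).add (isLittleO_const_id_atTop a).isBigO
  have hlinB : (fun x : ℝ => (Nat.card ↥(range lam ∩ Icc (-(x - b)) 0) : ℝ))
      =O[atTop] (fun x : ℝ => x) :=
    (hlinA.sub (hcardAB.trans isBigO_div_log_sq_id)).congr_left fun x => sub_sub_cancel _ _
  have hA' := isBigO_comp_sub_const_mul hA (hcardA.comp htA) hlinA
  have hB' := isBigO_comp_sub_const_mul hB (hcardB.comp htB) hlinB
  refine ((hA'.sub hB').add (hcardAB.const_mul_left c)).congr_left fun x => ?_
  simp only [Function.comp_apply]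
  ring
end

section
/- Assume that L is neither bounded from above nor from below, that for all a, b ∈ ℝ one has Λ([0, x+a]) − Λ([−x+b, 0]) = O(x/log²x) as x → ∞, and define S_Λ(z) = lim_{c→∞} Σ_{λ ∈ L ∩ [−c,c]} γ_λ/(λ − z) for z ∈ ℂ∖L. Then for every h ∈ ℝ, the set S_Λ^{−1}(h) = {z ∈ ℂ∖L : S_Λ(z) = h} is contained in ℝ and interlaces with L: it contains exactly one point in each open interval between two consecutive points of L. -/
open Filter Set Asymptotics Topology

/-- A sum over a subtype with finite carrier is the corresponding finite sum. -/
lemma tsum_coe_eq_sum_toFinset {α M : Type*} [AddCommMonoid M] [TopologicalSpace M]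
    {s : Set α} (hs : s.Finite) (f : α → M) :
    ∑' x : ↥s, f x = ∑ x ∈ hs.toFinset, f x := by
  have h := Finset.tsum_subtype' hs.toFinset f
  rwa [hs.coe_toFinset] at h

/-- The increment between `s` and `t` of the kernel `x ↦ 1 / (l - x)`. -/
lemma div_sub_div_kernel {g l s t : ℝ} (hs : l - s ≠ 0) (ht : l - t ≠ 0) :
    g / (l - t) - g / (l - s) = g * (t - s) / ((l - s) * (l - t)) := by
  field_simp
  ring

/-- Two points of a gap `(u, v)` lie on the same side of any point outside the gap. -/
lemma kernel_denom_pos {l u v s t : ℝ} (hl : l ≤ u ∨ v ≤ l)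
    (hs : s ∈ Ioo u v) (ht : t ∈ Ioo u v) : 0 < (l - s) * (l - t) := by
  rcases hl with hl | hl
  · exact mul_pos_of_neg_of_neg (by linarith [hs.1]) (by linarith [ht.1])
  · exact mul_pos (by linarith [hs.2]) (by linarith [ht.2])

/-- Comparison of kernel increments on a compact subinterval `[p, q]` of a gap `(u, v)`. -/
lemma kernel_denom_le {l u v p q s t d : ℝ} (hl : l ≤ u ∨ v ≤ l) (hd : 0 < d)
    (hup : u + d ≤ p) (hqv : q + d ≤ v) (hpq : p ≤ q) (hs : s ∈ Icc p q) (ht : t ∈ Icc p q) :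
    (l - p) * (l - q) ≤ (1 + (q - p) / d) * ((l - s) * (l - t)) := by
  have key : ∀ x : ℝ, d ≤ x → x * (x + (q - p)) ≤ (1 + (q - p) / d) * (x * x) := by
    intro x hx
    have h1 : q - p ≤ (q - p) / d * x := by
      rw [div_mul_eq_mul_div, le_div_iff₀ hd]
      exact mul_le_mul_of_nonneg_left hx (by linarith)
    nlinarith
  have hK : 0 ≤ 1 + (q - p) / d := by
    have : 0 ≤ (q - p) / d := div_nonneg (by linarith) hd.le
    linarith
  rcases hl with hl | hl
  · have h := key (p - l) (by linarith)
    have h2 : (p - l) * (p - l) ≤ (s - l) * (t - l) :=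
      mul_le_mul (by linarith [hs.1]) (by linarith [ht.1]) (by linarith) (by linarith [hs.1])
    have h3 := mul_le_mul_of_nonneg_left h2 hK
    nlinarith
  · have h := key (l - q) (by linarith)
    have h2 : (l - q) * (l - q) ≤ (l - s) * (l - t) :=
      mul_le_mul (by linarith [hs.2]) (by linarith [ht.2]) (by linarith) (by linarith [hs.2])
    have h3 := mul_le_mul_of_nonneg_left h2 hK
    nlinarith

section Gap

variable {L : Set ℝ} {γ : ℝ → ℝ} {F : ℝ → Finset ℝ} {R : ℝ → ℝ} {u v : ℝ}

/-- Across a gap, the limit of the sums `∑ γ l / (l - x)` increases at least as much as each of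
its terms. -/
lemma kernel_term_increment_le (hγ : ∀ l ∈ L, 0 < γ l) (hFL : ∀ c, ∀ l ∈ F c, l ∈ L)
    (hLF : ∀ l ∈ L, ∀ᶠ c in atTop, l ∈ F c) (hgap : ∀ l ∈ L, l ≤ u ∨ v ≤ l)
    (hR : ∀ t ∈ Ioo u v, Tendsto (fun c => ∑ l ∈ F c, γ l / (l - t)) atTop (𝓝 (R t)))
    {s t l : ℝ} (hs : s ∈ Ioo u v) (ht : t ∈ Ioo u v) (hst : s ≤ t) (hl : l ∈ L) :
    γ l / (l - t) - γ l / (l - s) ≤ R t - R s := by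
  refine ge_of_tendsto ((hR t ht).sub (hR s hs)) ?_
  filter_upwards [hLF l hl] with c hc
  rw [← Finset.sum_sub_distrib]
  refine Finset.single_le_sum (f := fun l => γ l / (l - t) - γ l / (l - s)) ?_ hc
  intro k hk
  have hpos := kernel_denom_pos (hgap k (hFL c k hk)) hs ht
  rw [div_sub_div_kernel (left_ne_zero_of_mul hpos.ne') (right_ne_zero_of_mul hpos.ne')]
  exact div_nonneg (mul_nonneg (hγ k (hFL c k hk)).le (by linarith)) hpos.le

/-- The limit of the sums `∑ γ l / (l - x)` is strictly increasing on a gap of `L`. -/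
lemma strictMonoOn_kernel_limit (hγ : ∀ l ∈ L, 0 < γ l) (hFL : ∀ c, ∀ l ∈ F c, l ∈ L)
    (hLF : ∀ l ∈ L, ∀ᶠ c in atTop, l ∈ F c) (hgap : ∀ l ∈ L, l ≤ u ∨ v ≤ l)
    (hR : ∀ t ∈ Ioo u v, Tendsto (fun c => ∑ l ∈ F c, γ l / (l - t)) atTop (𝓝 (R t)))
    (hL : L.Nonempty) : StrictMonoOn R (Ioo u v) := by
  intro s hs t ht hst
  obtain ⟨l, hl⟩ := hL
  have h := kernel_term_increment_le hγ hFL hLF hgap hR hs ht hst.le hl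
  have hpos := kernel_denom_pos (hgap l hl) hs ht
  rw [div_sub_div_kernel (left_ne_zero_of_mul hpos.ne') (right_ne_zero_of_mul hpos.ne')] at h
  have : 0 < γ l * (t - s) / ((l - s) * (l - t)) :=
    div_pos (mul_pos (hγ l hl) (by linarith)) hpos
  linarith

/-- The limit of the sums `∑ γ l / (l - x)` is continuous on compact subintervals of a gap. -/
lemma continuousOn_kernel_limit (hγ : ∀ l ∈ L, 0 < γ l) (hFL : ∀ c, ∀ l ∈ F c, l ∈ L)
    (hLF : ∀ l ∈ L, ∀ᶠ c in atTop, l ∈ F c) (hgap : ∀ l ∈ L, l ≤ u ∨ v ≤ l)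
    (hR : ∀ t ∈ Ioo u v, Tendsto (fun c => ∑ l ∈ F c, γ l / (l - t)) atTop (𝓝 (R t)))
    (hL : L.Nonempty) {p q : ℝ} (hup : u < p) (hpq : p < q) (hqv : q < v) :
    ContinuousOn R (Icc p q) := by
  have hp : p ∈ Ioo u v := ⟨hup, by linarith⟩
  have hq : q ∈ Ioo u v := ⟨by linarith, hqv⟩
  have hmem : ∀ x ∈ Icc p q, x ∈ Ioo u v := fun x hx => ⟨by linarith [hx.1], by linarith [hx.2]⟩
  have hmono := strictMonoOn_kernel_limit hγ hFL hLF hgap hR hL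
  obtain ⟨d, hd, hdp, hdq⟩ : ∃ d > 0, u + d ≤ p ∧ q + d ≤ v :=
    ⟨min (p - u) (v - q), lt_min (by linarith) (by linarith),
      by linarith [min_le_left (p - u) (v - q)], by linarith [min_le_right (p - u) (v - q)]⟩
  set C : ℝ := (1 + (q - p) / d) / (q - p) * (R q - R p) with hC
  have hC0 : 0 ≤ C := by
    have h1 : 0 < q - p := by linarith
    have h2 : 0 < R q - R p := sub_pos.2 (hmono hp hq hpq)
    positivity
  have hinc : ∀ s ∈ Icc p q, ∀ t ∈ Icc p q, s ≤ t → R t - R s ≤ C * (t - s) := by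
    intro s hs t ht hst
    have h2 := ((hR q hq).sub (hR p hp)).const_mul ((1 + (q - p) / d) / (q - p) * (t - s))
    have h3 := le_of_tendsto_of_tendsto' ((hR t (hmem t ht)).sub (hR s (hmem s hs))) h2 ?_
    · calc R t - R s ≤ _ := h3
        _ = C * (t - s) := by rw [hC]; ring
    intro c
    rw [← Finset.sum_sub_distrib, ← Finset.sum_sub_distrib, Finset.mul_sum]
    refine Finset.sum_le_sum fun l hl => ?_
    have hlL := hFL c l hl
    have h1 := kernel_denom_pos (hgap l hlL) (hmem s hs) (hmem t ht)
    have h1' := kernel_denom_pos (hgap l hlL) hp hq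
    rw [div_sub_div_kernel (left_ne_zero_of_mul h1.ne') (right_ne_zero_of_mul h1.ne'),
      div_sub_div_kernel (left_ne_zero_of_mul h1'.ne') (right_ne_zero_of_mul h1'.ne')]
    have hle := kernel_denom_le (hgap l hlL) hd hdp hdq hpq.le hs ht
    have hqp : q - p ≠ 0 := by linarith
    have heq : (1 + (q - p) / d) / (q - p) * (t - s) * (γ l * (q - p) / ((l - p) * (l - q)))
        = γ l * (t - s) * (1 + (q - p) / d) / ((l - p) * (l - q)) := by
      field_simp
    rw [heq, div_le_div_iff₀ h1 h1', mul_assoc (γ l * (t - s))]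
    exact mul_le_mul_of_nonneg_left hle (mul_nonneg (hγ l hlL).le (by linarith))
  have hlip : LipschitzOnWith ⟨C, hC0⟩ R (Icc p q) := by
    refine LipschitzOnWith.of_le_add_mul _ fun x hx y hy => ?_
    change R x ≤ R y + C * dist x y
    rcases le_total y x with h | h
    · rw [Real.dist_eq, abs_of_nonneg (by linarith)]
      linarith [hinc y hy x hx h]
    · have := hmono.monotoneOn (hmem x hx) (hmem y hy) h
      have := mul_nonneg hC0 (dist_nonneg (x := x) (y := y))
      linarith
  exact hlip.continuousOn

/-- For `g > 0`, the quotient `g / e` exceeds any bound for some `e` in `(0, w)`. -/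
lemma exists_gt_of_pole_bound {g A B : ℝ} (hg : 0 < g) {w : ℝ} (hw : 0 < w) :
    ∃ e ∈ Ioo 0 w, A < g / e - B := by
  refine ⟨min (w / 2) (g / (|A + B| + 1)), ⟨by positivity, ?_⟩, ?_⟩
  · exact (min_le_left _ _).trans_lt (by linarith)
  · have h0 : 0 < min (w / 2) (g / (|A + B| + 1)) := by positivity
    have h1 : |A + B| + 1 ≤ g / min (w / 2) (g / (|A + B| + 1)) := by
      rw [le_div_iff₀ h0, mul_comm, ← le_div_iff₀ (by positivity)]
      exact min_le_right _ _
    linarith [le_abs_self (A + B)]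

/-- The limit of the sums `∑ γ l / (l - x)` takes every real value exactly once on the gap
between two consecutive points of `L`. -/
lemma existsUnique_kernel_limit_eq (hγ : ∀ l ∈ L, 0 < γ l) (hFL : ∀ c, ∀ l ∈ F c, l ∈ L)
    (hLF : ∀ l ∈ L, ∀ᶠ c in atTop, l ∈ F c) (hgap : ∀ l ∈ L, l ≤ u ∨ v ≤ l)
    (hR : ∀ t ∈ Ioo u v, Tendsto (fun c => ∑ l ∈ F c, γ l / (l - t)) atTop (𝓝 (R t)))
    (hu : u ∈ L) (hv : v ∈ L) (huv : u < v) (h : ℝ) :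
    ∃! t : ℝ, t ∈ Ioo u v ∧ R t = h := by
  have hmono := strictMonoOn_kernel_limit hγ hFL hLF hgap hR ⟨u, hu⟩
  obtain ⟨m, hum, hmv⟩ := exists_between huv
  obtain ⟨e, ⟨he0, he⟩, hlow⟩ :=
    exists_gt_of_pole_bound (A := R m - h) (B := γ u / (m - u)) (hγ u hu) (sub_pos.2 hum)
  obtain ⟨f, ⟨hf0, hf⟩, hhigh⟩ :=
    exists_gt_of_pole_bound (A := h - R m) (B := γ v / (v - m)) (hγ v hv) (sub_pos.2 hmv)
  have hp : u + e ∈ Ioo u v := ⟨by linarith, by linarith⟩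
  have hq : v - f ∈ Ioo u v := ⟨by linarith, by linarith⟩
  have h1 := kernel_term_increment_le hγ hFL hLF hgap hR hp ⟨hum, hmv⟩ (by linarith) hu
  have h2 := kernel_term_increment_le hγ hFL hLF hgap hR ⟨hum, hmv⟩ hq (by linarith) hv
  rw [show u - m = -(m - u) by ring, show u - (u + e) = -e by ring, div_neg, div_neg] at h1
  rw [show v - (v - f) = f by ring] at h2
  obtain ⟨t, ht, hth⟩ := intermediate_value_Icc (by linarith : u + e ≤ v - f)
    (continuousOn_kernel_limit hγ hFL hLF hgap hR ⟨u, hu⟩ hp.1 (by linarith) hq.2)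
    (show h ∈ Icc (R (u + e)) (R (v - f)) from ⟨by linarith, by linarith⟩)
  have htm : t ∈ Ioo u v := ⟨by linarith [ht.1], by linarith [ht.2]⟩
  exact ⟨t, ⟨htm, hth⟩, fun s hs => hmono.injOn hs.1 htm (hs.2.trans hth.symm)⟩

/-- The limit of the sums `∑ γ l / (l - z)` is not real at a nonreal point `z`. -/
lemma im_eq_zero_of_kernel_limit_im_eq_zero (hγ : ∀ l ∈ L, 0 < γ l)
    (hFL : ∀ c, ∀ l ∈ F c, l ∈ L) (hLF : ∀ l ∈ L, ∀ᶠ c in atTop, l ∈ F c) (hL : L.Nonempty)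
    {z w : ℂ}
    (hw : Tendsto (fun c => ∑ l ∈ F c, (γ l : ℂ) / ((l : ℂ) - z)) atTop (𝓝 w))
    (hw0 : w.im = 0) : z.im = 0 := by
  by_contra hz
  obtain ⟨k, hk⟩ := hL
  have him : ∀ l : ℝ, ((γ l : ℂ) / ((l : ℂ) - z)).im = z.im * (γ l / Complex.normSq (l - z)) := by
    intro l
    rw [Complex.div_im]
    simp
    ring
  have hpos : ∀ l : ℝ, 0 < Complex.normSq (l - z) := by
    intro l
    rw [Complex.normSq_pos, sub_ne_zero]
    rintro rfl
    simp at hz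
  have ht : Tendsto (fun c => ∑ l ∈ F c, γ l / Complex.normSq (l - z)) atTop (𝓝 0) := by
    have h1 := ((Complex.continuous_im.tendsto w).comp hw).const_mul (z.im)⁻¹
    rw [hw0, mul_zero] at h1
    refine h1.congr fun c => ?_
    simp only [Function.comp, Complex.im_sum, him]
    rw [← Finset.mul_sum, inv_mul_cancel_left₀ hz]
  have h2 : γ k / Complex.normSq (k - z) ≤ 0 := by
    refine ge_of_tendsto ht ?_
    filter_upwards [hLF k hk] with c hc
    exact Finset.single_le_sum (f := fun l : ℝ => γ l / Complex.normSq (l - z))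
      (fun l hl => (div_pos (hγ l (hFL c l hl)) (hpos l)).le) hc
  exact absurd (div_pos (hγ k hk) (hpos k)) h2.not_gt

end Gap

/-- For every `h ∈ ℝ`, the level set `S_Λ^{-1}(h)` is contained in `ℝ` and interlaces
with `L`: there is exactly one solution in each open interval between two consecutive
points of `L`. -/
theorem stieltjes_level_set_interlaces
    (L : Set ℝ) (γ : ℝ → ℝ)
    (hLfin : ∀ a b : ℝ, (L ∩ Set.Icc a b).Finite)
    (hub : ¬ BddAbove L) (hlb : ¬ BddBelow L)
    (hγpos : ∀ l ∈ L, 0 < γ l)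
    (hgrowth : ∀ a b : ℝ,
      (fun x : ℝ => (∑' l : ↥(L ∩ Set.Icc 0 (x + a)), γ (l : ℝ))
          - (∑' l : ↥(L ∩ Set.Icc (-x + b) 0), γ (l : ℝ)))
        =O[atTop] (fun x : ℝ => x / (Real.log x) ^ 2))
    (S : ℂ → ℂ)
    (hS : ∀ z : ℂ, (∀ l ∈ L, z ≠ (l : ℂ)) →
      Tendsto
        (fun c : ℝ => ∑' l : ↥(L ∩ Set.Icc (-c) c),
          ((γ (l : ℝ) : ℂ) / (((l : ℝ) : ℂ) - z)))
        atTop (𝓝 (S z))) :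
    ∀ h : ℝ,
      (∀ z : ℂ, (∀ l ∈ L, z ≠ (l : ℂ)) → S z = (h : ℂ) → z.im = 0)
      ∧ ∀ lam₁ lam₂ : ℝ, lam₁ ∈ L → lam₂ ∈ L → lam₁ < lam₂ →
          L ∩ Set.Ioo lam₁ lam₂ = ∅ →
          ∃! t : ℝ, t ∈ Set.Ioo lam₁ lam₂ ∧ S (t : ℂ) = (h : ℂ) := by
  intro h
  have hFL : ∀ c : ℝ, ∀ l ∈ (hLfin (-c) c).toFinset, l ∈ L := fun c l hl =>
    ((hLfin (-c) c).mem_toFinset.1 hl).1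
  have hLF : ∀ l ∈ L, ∀ᶠ c : ℝ in atTop, l ∈ (hLfin (-c) c).toFinset := by
    intro l hl
    filter_upwards [eventually_ge_atTop |l|] with c hc
    exact (hLfin (-c) c).mem_toFinset.2 ⟨hl, abs_le.1 hc⟩
  have hS' : ∀ z : ℂ, (∀ l ∈ L, z ≠ (l : ℂ)) →
      Tendsto (fun c : ℝ => ∑ l ∈ (hLfin (-c) c).toFinset, (γ l : ℂ) / ((l : ℂ) - z))
        atTop (𝓝 (S z)) := fun z hz =>
    (hS z hz).congr fun c =>
      tsum_coe_eq_sum_toFinset (hLfin (-c) c) fun l : ℝ => (γ l : ℂ) / ((l : ℂ) - z)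
  refine ⟨fun z hz hzh => ?_, fun u v hu hv huv hempty => ?_⟩
  · have hne : L.Nonempty := nonempty_of_not_bddAbove hub
    exact im_eq_zero_of_kernel_limit_im_eq_zero hγpos hFL hLF hne (hS' z hz) (by simp [hzh])
  · have hgap : ∀ l ∈ L, l ≤ u ∨ v ≤ l := by
      intro l hl
      by_contra! hcon
      exact (hempty ▸ (⟨hl, hcon⟩ : l ∈ L ∩ Ioo u v) : l ∈ (∅ : Set ℝ))
    have hoff : ∀ t ∈ Ioo u v, ∀ l ∈ L, (t : ℂ) ≠ (l : ℂ) := by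
      intro t ht l hl heq
      obtain rfl : t = l := Complex.ofReal_injective heq
      rcases hgap t hl with h' | h'
      · exact h'.not_gt ht.1
      · exact h'.not_gt ht.2
    have hcast : ∀ t c : ℝ, ∑ l ∈ (hLfin (-c) c).toFinset, (γ l : ℂ) / ((l : ℂ) - (t : ℂ))
        = ((∑ l ∈ (hLfin (-c) c).toFinset, γ l / (l - t) : ℝ) : ℂ) := by
      intro t c
      push_cast
      rfl
    have hR : ∀ t ∈ Ioo u v, Tendsto
        (fun c : ℝ => ∑ l ∈ (hLfin (-c) c).toFinset, γ l / (l - t)) atTop (𝓝 (S t).re) := by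
      intro t ht
      refine ((Complex.continuous_re.tendsto _).comp (hS' t (hoff t ht))).congr fun c => ?_
      rw [Function.comp_apply, hcast, Complex.ofReal_re]
    have him : ∀ t ∈ Ioo u v, (S t).im = 0 := by
      intro t ht
      refine tendsto_nhds_unique
        ((Complex.continuous_im.tendsto _).comp (hS' t (hoff t ht))) ?_
      refine tendsto_const_nhds.congr fun c => ?_
      rw [Function.comp_apply, hcast, Complex.ofReal_im]
    obtain ⟨t, ⟨ht, hth⟩, huniq⟩ :=
      existsUnique_kernel_limit_eq (R := fun t : ℝ => (S t).re) hγpos hFL hLF hgap hR hu hv huv h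
    refine ⟨t, ⟨ht, Complex.ext hth (him t ht)⟩, fun s hs => huniq s ⟨hs.1, ?_⟩⟩
    simp [hs.2]
end

section
/- Let n ≥ 1, let (λ_j)_{j∈ℤ} be a strictly increasing sequence of real numbers with λ_{j+n} = λ_j + 2πn for all j ∈ ℤ, and let (γ_j)_{j∈ℤ} be positive reals with γ_{j+n} = γ_j for all j. Then for every z ∈ ℂ with z ∉ {λ_j : j ∈ ℤ}, the limit lim_{k→∞} Σ_{j=−kn}^{kn−1} γ_j/(λ_j − z) exists and equals (1/2n) Σ_{j=0}^{n−1} γ_j cot((λ_j − z)/(2n)), which also equals Σ_{j=0}^{n−1} (γ_j/(2n)) · i(u_j + u)/(u_j − u), where u_j = e^{iλ_j/n} and u = e^{iz/n}. -/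
open Filter Set Topology BigOperators

/-- Symmetric partial sums of the Mittag-Leffler expansion of `π cot (π x)`, over `[-k, k)`. -/
theorem tendsto_sum_Ico_inv_add_int_cot {x : ℂ} (hx : x ∈ Complex.integerComplement) :
    Tendsto (fun k : ℕ => ∑ m ∈ Finset.Ico (-(k : ℤ)) (k : ℤ), (x + (m : ℂ))⁻¹) atTop
      (𝓝 (Real.pi * Complex.cot (Real.pi * x))) := by
  have hsum : ∀ k : ℕ, ∑ m ∈ Finset.Ico (-(k : ℤ)) (k : ℤ), (x + (m : ℂ))⁻¹ =
      ∑ j ∈ Finset.range k, cotTerm x j + 1 / x - (x + (k : ℂ))⁻¹ := by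
    intro k
    induction k with
    | zero => simp
    | succ k ih =>
      have hset : Finset.Ico (-((k + 1 : ℕ) : ℤ)) ((k + 1 : ℕ) : ℤ) =
          insert (-(k : ℤ) - 1) (insert (k : ℤ) (Finset.Ico (-(k : ℤ)) (k : ℤ))) := by
        ext m
        simp only [Finset.mem_insert, Finset.mem_Ico]
        omega
      rw [hset, Finset.sum_insert (by simp only [Finset.mem_insert, Finset.mem_Ico]; omega),
        Finset.sum_insert (by simp), ih, Finset.sum_range_succ]
      simp only [cotTerm]
      push_cast
      ring
  have hinv : Tendsto (fun k : ℕ => (x + (k : ℂ))⁻¹) atTop (𝓝 0) :=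
    tendsto_inv₀_cobounded.comp
      ((tendsto_const_add_cobounded x).comp tendsto_natCast_atTop_cobounded)
  simp_rw [hsum]
  simpa using ((tendsto_logDeriv_euler_cot_sub hx).add_const (1 / x)).sub hinv

/-- A sum over `[a n, b n)` split into residues modulo `n` and blocks of length `n`. -/
theorem sum_Ico_mul_eq_sum_range_sum_Ico {M : Type*} [AddCommMonoid M] {n : ℕ} (hn : 0 < n)
    (a b : ℤ) (f : ℤ → M) :
    ∑ j ∈ Finset.Ico (a * n) (b * n), f j =
      ∑ r ∈ Finset.range n, ∑ m ∈ Finset.Ico a b, f (r + m * n) := by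
  have hn' : (0 : ℤ) < n := by exact_mod_cast hn
  rw [← Finset.sum_product']
  refine Finset.sum_nbij' (fun j => ((j % n).toNat, j / n)) (fun p => p.1 + p.2 * n)
    ?_ ?_ ?_ ?_ ?_
  · intro j hj
    rw [Finset.mem_Ico] at hj
    have h0 := Int.emod_nonneg j hn'.ne'
    have h1 := Int.emod_lt_of_pos j hn'
    simp only [Finset.mem_product, Finset.mem_range, Finset.mem_Ico]
    exact ⟨by omega, (Int.le_ediv_iff_mul_le hn').2 hj.1, (Int.ediv_lt_iff_lt_mul hn').2 hj.2⟩
  · rintro ⟨r, m⟩ h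
    simp only [Finset.mem_product, Finset.mem_range, Finset.mem_Ico] at h ⊢
    obtain ⟨hr, ha, hb⟩ := h
    have hr' : (r : ℤ) < n := by exact_mod_cast hr
    constructor <;> nlinarith
  · intro j _
    simp only [Int.toNat_of_nonneg (Int.emod_nonneg j hn'.ne')]
    exact Int.emod_add_ediv_mul j n
  · rintro ⟨r, m⟩ h
    simp only [Finset.mem_product, Finset.mem_range] at h
    have hr' : (r : ℤ) < n := by exact_mod_cast h.1
    have h0 : (0 : ℤ) ≤ r := by positivity
    simp [Int.add_mul_ediv_right _ _ hn'.ne', Int.emod_eq_of_lt h0 hr', Int.ediv_eq_zero_of_lt h0 hr']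
  · intro j _
    simp only [Int.toNat_of_nonneg (Int.emod_nonneg j hn'.ne')]
    rw [Int.emod_add_ediv_mul]

/-- The cotangent of half a difference as a Möbius function of the exponentials. -/
theorem Complex.cot_half_sub_eq_exp_ratio (a b : ℂ) :
    Complex.cot ((a - b) / 2) = Complex.I * (Complex.exp (Complex.I * a) +
      Complex.exp (Complex.I * b)) / (Complex.exp (Complex.I * a) - Complex.exp (Complex.I * b)) := by
  rw [Complex.cot_eq_exp_ratio,
    show 2 * Complex.I * ((a - b) / 2) = Complex.I * a - Complex.I * b by ring, Complex.exp_sub]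
  have hb := Complex.exp_ne_zero (Complex.I * b)
  generalize Complex.exp (Complex.I * a) = v at *
  generalize Complex.exp (Complex.I * b) = u at *
  rcases eq_or_ne v u with rfl | h
  · simp [hb]
  · have h1 := sub_ne_zero.2 h
    have h2 := sub_ne_zero.2 h.symm
    rw [show 1 - v / u = (u - v) / u by field_simp, show v / u + 1 = (v + u) / u by field_simp]
    field_simp
    rw [Complex.I_sq]
    ring

/-- For a `2πn`-periodic configuration `λ_{j+n} = λ_j + 2πn` with `n`-periodic positive
weights, the principal value `lim_k Σ_{j=-kn}^{kn-1} γ_j/(λ_j - z)` exists and equals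
`(1/2n) Σ_{j=0}^{n-1} γ_j cot((λ_j - z)/2n)`, which equals
`Σ_{j=0}^{n-1} (γ_j/2n) · i(u_j + u)/(u_j - u)` with `u_j = e^{iλ_j/n}`, `u = e^{iz/n}`. -/
theorem periodic_stieltjes_cotangent
    (n : ℕ) (hn : 0 < n) (lam : ℤ → ℝ) (γ : ℤ → ℝ)
    (hmono : StrictMono lam)
    (hlamper : ∀ j : ℤ, lam (j + (n : ℤ)) = lam j + 2 * Real.pi * (n : ℝ))
    (hγpos : ∀ j, 0 < γ j)
    (hγper : ∀ j : ℤ, γ (j + (n : ℤ)) = γ j)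
    (z : ℂ) (hz : ∀ j : ℤ, z ≠ (lam j : ℂ)) :
    Tendsto
      (fun k : ℕ => ∑ j ∈ Finset.Ico (-((k : ℤ) * (n : ℤ))) ((k : ℤ) * (n : ℤ)),
        ((γ j : ℂ) / ((lam j : ℂ) - z)))
      atTop
      (𝓝 ((1 / (2 * (n : ℂ))) * ∑ j ∈ Finset.range n,
        (γ (j : ℤ) : ℂ) * Complex.cot (((lam (j : ℤ) : ℂ) - z) / (2 * (n : ℂ)))))
    ∧ (1 / (2 * (n : ℂ))) * (∑ j ∈ Finset.range n,
        (γ (j : ℤ) : ℂ) * Complex.cot (((lam (j : ℤ) : ℂ) - z) / (2 * (n : ℂ))))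
      = ∑ j ∈ Finset.range n,
          ((γ (j : ℤ) : ℂ) / (2 * (n : ℂ))) *
            (Complex.I *
              (Complex.exp (Complex.I * (lam (j : ℤ) : ℂ) / (n : ℂ))
                + Complex.exp (Complex.I * z / (n : ℂ)))
              / (Complex.exp (Complex.I * (lam (j : ℤ) : ℂ) / (n : ℂ))
                - Complex.exp (Complex.I * z / (n : ℂ)))) := by
  have hn0 : (n : ℂ) ≠ 0 := by exact_mod_cast hn.ne'
  have hpi : (Real.pi : ℂ) ≠ 0 := by exact_mod_cast Real.pi_ne_zero
  have hγ : ∀ j m : ℤ, γ (j + m * n) = γ j := fun j m => by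
    simpa using (show Function.Periodic γ (n : ℤ) from hγper).int_mul m j
  have hlam : ∀ j m : ℤ, lam (j + m * n) = lam j + 2 * Real.pi * n * m := fun j m => by
    have hper : Function.Periodic (fun j : ℤ => lam j - 2 * Real.pi * j) (n : ℤ) := fun j => by
      simp only [hlamper]
      push_cast
      ring
    have := hper.int_mul m j
    simp only [Int.cast_id] at this
    push_cast at this
    linarith
  constructor
  · simp_rw [← neg_mul, sum_Ico_mul_eq_sum_range_sum_Ico hn]
    rw [Finset.mul_sum]
    refine tendsto_finsetSum _ fun r _ => ?_
    set x : ℂ := ((lam r : ℂ) - z) / (2 * Real.pi * n) with hxdef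
    have hx : x ∈ Complex.integerComplement := by
      rintro ⟨m, hm⟩
      apply hz (r + (-m) * n)
      rw [hlam]
      rw [hxdef, eq_div_iff (by simp [hn0, hpi])] at hm
      push_cast
      linear_combination hm
    have hlim := (tendsto_sum_Ico_inv_add_int_cot hx).const_mul ((γ r : ℂ) / (2 * Real.pi * n))
    convert hlim using 2 with k
    · rw [Finset.mul_sum]
      refine Finset.sum_congr rfl fun m _ => ?_
      have hden : (lam r : ℂ) + 2 * Real.pi * n * m - z = (2 * Real.pi * n) * (x + m) := by
        rw [hxdef]
        field_simp
        ring
      rw [hγ, hlam]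
      push_cast
      rw [hden, ← div_div, div_eq_mul_inv (_ / _)]
    · rw [show (Real.pi : ℂ) * x = ((lam r : ℂ) - z) / (2 * n) by rw [hxdef]; field_simp]
      field_simp
  · rw [Finset.mul_sum]
    refine Finset.sum_congr rfl fun j _ => ?_
    rw [show ((lam j : ℂ) - z) / (2 * n) = ((lam j : ℂ) / n - z / n) / 2 by field_simp,
      Complex.cot_half_sub_eq_exp_ratio]
    simp only [mul_div_assoc]
    ring
end

section
/- Let (f_n)_{n≥1} and (g_n)_{n≥1} be sequences of meromorphic functions on an open set U ⊂ ℂ, converging uniformly on U, with respect to the chordal distance d on the Riemann sphere, to functions f and g respectively (which are then necessarily meromorphic on U). Assume that none of these functions is identically ∞ on any connected component of U, and that f and g have no common pole. Then the sequence (f_n + g_n)_{n≥1} converges to f + g uniformly on every compact subset of U, with respect to the distance d. -/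
open Filter Set Topology

/-- The chordal (spherical) distance on the Riemann sphere `ℂ ∪ {∞}`,
modelled as `Option ℂ` with `none` representing the point `∞`. -/
noncomputable def chordal : Option ℂ → Option ℂ → ℝ
  | none, none => 0
  | none, some b => 1 / Real.sqrt (1 + ‖b‖ ^ 2)
  | some a, none => 1 / Real.sqrt (1 + ‖a‖ ^ 2)
  | some a, some b => ‖b - a‖ / Real.sqrt ((1 + ‖a‖ ^ 2) * (1 + ‖b‖ ^ 2))

/-- Pointwise sum of two sphere-valued functions: finite values add, and the sum is
`∞` as soon as one of the arguments is `∞`. -/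
def sphereAdd : Option ℂ → Option ℂ → Option ℂ
  | some a, some b => some (a + b)
  | _, _ => none

/-- The inversion `w ↦ 1/w` on the Riemann sphere `ℂ ∪ {∞}`. -/
noncomputable def sphereInv : Option ℂ → Option ℂ
  | none => some 0
  | some z => if z = 0 then none else some z⁻¹

/-- A sphere-valued map is meromorphic on an open set `U` if near every point of `U`
either it or its pointwise inverse is (the coercion of) an analytic `ℂ`-valued map. -/
def MeroSphereOn (F : ℂ → Option ℂ) (U : Set ℂ) : Prop :=
  ∀ z ∈ U, ∃ V ∈ nhds z, ∃ f : ℂ → ℂ, (∀ x ∈ V, AnalyticAt ℂ f x) ∧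
    ((∀ w ∈ V, F w = some (f w)) ∨ (∀ w ∈ V, sphereInv (F w) = some (f w)))

theorem sqrt_one_add_norm_add_sq_le (x y : ℂ) :
    √(1 + ‖x + y‖ ^ 2) ≤ √(1 + ‖x‖ ^ 2) + ‖y‖ := by
  have hx : ‖x‖ ≤ √(1 + ‖x‖ ^ 2) := Real.le_sqrt_of_sq_le (by linarith)
  have hs : √(1 + ‖x‖ ^ 2) ^ 2 = 1 + ‖x‖ ^ 2 := Real.sq_sqrt (by positivity)
  refine Real.sqrt_le_iff.2 ⟨by positivity, ?_⟩
  have h : ‖x + y‖ ^ 2 ≤ (‖x‖ + ‖y‖) ^ 2 := by gcongr; exact norm_add_le x y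
  nlinarith [norm_nonneg y]

theorem one_le_sqrt_one_add_norm_sq (x : ℂ) : 1 ≤ √(1 + ‖x‖ ^ 2) :=
  Real.one_le_sqrt.2 (by nlinarith [sq_nonneg ‖x‖])

theorem sqrt_one_add_norm_sq_le_one_add (x : ℂ) : √(1 + ‖x‖ ^ 2) ≤ 1 + ‖x‖ := by
  simpa using sqrt_one_add_norm_add_sq_le 0 x

theorem sqrt_one_add_norm_sq_le_mul_translate {R : ℝ} {a : ℂ} (ha : ‖a‖ ≤ R) (b : ℂ) :
    √(1 + ‖b‖ ^ 2) ≤ (1 + R) * √(1 + ‖a + b‖ ^ 2) := by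
  have h := sqrt_one_add_norm_add_sq_le (a + b) (-a)
  rw [norm_neg, add_neg_cancel_comm] at h
  nlinarith [one_le_sqrt_one_add_norm_sq (a + b), norm_nonneg a]

theorem chordal_some_some (a b : ℂ) :
    chordal (some a) (some b) = ‖b - a‖ / (√(1 + ‖a‖ ^ 2) * √(1 + ‖b‖ ^ 2)) := by
  rw [chordal, Real.sqrt_mul (by positivity)]

theorem sphereAdd_comm (x y : Option ℂ) : sphereAdd x y = sphereAdd y x := by
  cases x <;> cases y <;> simp [sphereAdd, add_comm]

/-- Near a bounded finite point, chordal closeness implies finiteness and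
Euclidean closeness. -/
theorem exists_eq_some_of_chordal_lt {C δ : ℝ} {x : Option ℂ} {a : ℂ}
    (ha : 1 + ‖a‖ ≤ C) (hδ : δ * C ≤ 1 / 2) (h : chordal x (some a) < δ) :
    ∃ b, x = some b ∧ ‖a - b‖ ≤ 2 * δ * C ^ 2 := by
  have hj := one_le_sqrt_one_add_norm_sq a
  have hjC := (sqrt_one_add_norm_sq_le_one_add a).trans ha
  have hC : 0 < C := by linarith
  cases x with
  | none =>
    rw [chordal, div_lt_iff₀ (by linarith)] at h
    nlinarith
  | some b =>
    refine ⟨b, rfl, ?_⟩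
    have hb := one_le_sqrt_one_add_norm_sq b
    have hba := sqrt_one_add_norm_add_sq_le a (b - a)
    rw [add_sub_cancel, norm_sub_rev] at hba
    rw [chordal_some_some, div_lt_iff₀ (by nlinarith)] at h
    have hδ0 : 0 < δ := by
      by_contra! hn
      nlinarith [norm_nonneg (a - b), mul_pos (zero_lt_one.trans_le hb) (zero_lt_one.trans_le hj)]
    have hle : ‖a - b‖ ≤ δ * ((C + ‖a - b‖) * C) := by
      refine h.le.trans ?_
      gcongr
      linarith
    nlinarith [norm_nonneg (a - b), mul_le_mul_of_nonneg_right hδ (norm_nonneg (a - b))]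

/-- The translation of the second summand by bounded finite points is Lipschitz for the
chordal distance, jointly with the Euclidean distance in the first summand. -/
theorem chordal_sphereAdd_le {R : ℝ} {a a' : ℂ} (ha : ‖a‖ ≤ R) (ha' : ‖a'‖ ≤ R)
    (y y' : Option ℂ) :
    chordal (sphereAdd (some a) y) (sphereAdd (some a') y') ≤
      (1 + R) ^ 2 * chordal y y' + ‖a' - a‖ := by
  have hR : 0 ≤ R := (norm_nonneg a).trans ha
  have single : ∀ {c : ℂ}, ‖c‖ ≤ R → ∀ b : ℂ,
      1 / √(1 + ‖c + b‖ ^ 2) ≤ (1 + R) ^ 2 * (1 / √(1 + ‖b‖ ^ 2)) := by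
    intro c hc b
    have h1 := sqrt_one_add_norm_sq_le_mul_translate hc b
    have h2 := one_le_sqrt_one_add_norm_sq b
    have h3 := one_le_sqrt_one_add_norm_sq (c + b)
    rw [mul_one_div, div_le_div_iff₀ (by linarith) (by linarith)]
    nlinarith [mul_nonneg (mul_nonneg hR (by linarith : 0 ≤ 1 + R))
      (by linarith : 0 ≤ √(1 + ‖c + b‖ ^ 2))]
  have hn := norm_nonneg (a' - a)
  rcases y with _ | b <;> rcases y' with _ | b'
  · simp only [sphereAdd, chordal]
    linarith
  · simp only [sphereAdd, chordal]
    linarith [single ha' b']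
  · simp only [sphereAdd, chordal]
    linarith [single ha b]
  · simp only [sphereAdd, chordal_some_some]
    have h1 := sqrt_one_add_norm_sq_le_mul_translate ha b
    have h2 := sqrt_one_add_norm_sq_le_mul_translate ha' b'
    have h3 := one_le_sqrt_one_add_norm_sq b
    have h4 := one_le_sqrt_one_add_norm_sq b'
    have h5 := one_le_sqrt_one_add_norm_sq (a + b)
    have h6 := one_le_sqrt_one_add_norm_sq (a' + b')
    set p := √(1 + ‖a + b‖ ^ 2)
    set q := √(1 + ‖a' + b'‖ ^ 2)
    set s := √(1 + ‖b‖ ^ 2)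
    set t := √(1 + ‖b'‖ ^ 2)
    have hp : 0 < p := by linarith
    have hq : 0 < q := by linarith
    have hs : 0 < s := by linarith
    have ht : 0 < t := by linarith
    have hst : s * t ≤ (1 + R) ^ 2 * (p * q) :=
      (mul_le_mul h1 h2 ht.le (by positivity)).trans_eq (by ring)
    have hsplit : ‖a' + b' - (a + b)‖ ≤ ‖b' - b‖ + ‖a' - a‖ := by
      rw [show a' + b' - (a + b) = (b' - b) + (a' - a) by ring]
      exact norm_add_le _ _
    calc ‖a' + b' - (a + b)‖ / (p * q)
        ≤ ‖b' - b‖ / (p * q) + ‖a' - a‖ / (p * q) := by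
          rw [← add_div]
          gcongr
      _ ≤ (1 + R) ^ 2 * (‖b' - b‖ / (s * t)) + ‖a' - a‖ := by
          refine add_le_add ?_ (div_le_self hn (one_le_mul_of_one_le_of_one_le h5 h6))
          rw [← mul_div_assoc, div_le_div_iff₀ (by positivity) (by positivity)]
          calc ‖b' - b‖ * (s * t) ≤ ‖b' - b‖ * ((1 + R) ^ 2 * (p * q)) := by gcongr
            _ = (1 + R) ^ 2 * ‖b' - b‖ * (p * q) := by ring

/-- Addition on the sphere is uniformly continuous near pairs of points the first of which
stays in a bounded subset of `ℂ`. -/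
theorem exists_chordal_sphereAdd_lt {M ε : ℝ} (hM : 0 ≤ M) (hε : 0 < ε) :
    ∃ δ > 0, ∀ (x y y' : Option ℂ) (a : ℂ), ‖a‖ ≤ M → chordal x (some a) < δ →
      chordal y y' < δ → chordal (sphereAdd x y) (sphereAdd (some a) y') < ε := by
  have hmin : 0 < min 1 ε := lt_min one_pos hε
  obtain ⟨δ, hδ⟩ : ∃ δ, δ = min 1 ε / (4 * (2 + M) ^ 2) := ⟨_, rfl⟩
  have hδ0 : 0 < δ := by rw [hδ]; positivity
  have hδC : δ * (2 + M) ^ 2 = min 1 ε / 4 := by rw [hδ]; field_simp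
  have h1 := min_le_left 1 ε
  have h2 := min_le_right 1 ε
  refine ⟨δ, hδ0, fun x y y' a ha hx hy => ?_⟩
  obtain ⟨b, rfl, hb⟩ := exists_eq_some_of_chordal_lt (C := 2 + M) (by linarith)
    (by nlinarith [mul_nonneg hδ0.le hM]) hx
  have hbR : ‖b‖ ≤ 1 + M := by
    have := norm_sub_norm_le b a
    rw [norm_sub_rev] at this
    linarith
  have key := chordal_sphereAdd_le hbR (by linarith : ‖a‖ ≤ 1 + M) y y'
  have hy2 := mul_lt_mul_of_pos_left hy (by positivity : 0 < (2 + M) ^ 2)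
  rw [show 1 + (1 + M) = 2 + M by ring] at key
  linarith

/-- A meromorphic map is locally bounded away from its poles. -/
theorem MeroSphereOn.eventually_bounded {F : ℂ → Option ℂ} {U : Set ℂ}
    (hF : MeroSphereOn F U) {z : ℂ} (hz : z ∈ U) (hne : F z ≠ none) :
    ∃ M : ℝ, ∀ᶠ w in 𝓝 z, ∃ a, F w = some a ∧ ‖a‖ ≤ M := by
  obtain ⟨V, hV, φ, hφ, h | h⟩ := hF z hz
  · have hc := (hφ z (mem_of_mem_nhds hV)).continuousAt.norm
    refine ⟨‖φ z‖ + 1, ?_⟩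
    filter_upwards [hV, hc.eventually_lt continuousAt_const (lt_add_one _)] with w hw hlt
    exact ⟨φ w, h w hw, hlt.le⟩
  · have hφz : φ z ≠ 0 := by
      have hz' := h z (mem_of_mem_nhds hV)
      obtain ⟨a, ha⟩ := Option.ne_none_iff_exists'.1 hne
      rw [ha, sphereInv] at hz'
      split_ifs at hz' with h0
      rw [← Option.some.inj hz']
      exact inv_ne_zero h0
    have hc := (hφ z (mem_of_mem_nhds hV)).continuousAt
    refine ⟨‖(φ z)⁻¹‖ + 1, ?_⟩
    filter_upwards [hV, hc.eventually_ne hφz,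
      (hc.inv₀ hφz).norm.eventually_lt continuousAt_const (lt_add_one _)] with w hw h0 hlt
    have hw' := h w hw
    cases hFw : F w with
    | none =>
      rw [hFw, sphereInv] at hw'
      exact absurd (Option.some.inj hw').symm h0
    | some a =>
      rw [hFw, sphereInv] at hw'
      split_ifs at hw'
      refine ⟨a, rfl, ?_⟩
      rw [Pi.inv_apply, Pi.inv_apply, ← Option.some.inj hw', inv_inv] at hlt
      exact hlt.le

/-- Two meromorphic maps without common pole are, at each point of a compact set, not both
large. -/
theorem MeroSphereOn.exists_bound_of_no_common_pole {F G : ℂ → Option ℂ} {U K : Set ℂ}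
    (hF : MeroSphereOn F U) (hG : MeroSphereOn G U)
    (hFG : ∀ z ∈ U, ¬(F z = none ∧ G z = none)) (hKU : K ⊆ U) (hK : IsCompact K) :
    ∃ M : ℝ, 0 ≤ M ∧ ∀ z ∈ K,
      (∃ a, F z = some a ∧ ‖a‖ ≤ M) ∨ (∃ a, G z = some a ∧ ‖a‖ ≤ M) := by
  refine hK.induction_on (p := fun s => ∃ M : ℝ, 0 ≤ M ∧ ∀ z ∈ s,
      (∃ a, F z = some a ∧ ‖a‖ ≤ M) ∨ (∃ a, G z = some a ∧ ‖a‖ ≤ M)) ⟨0, le_rfl, by simp⟩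
    ?_ ?_ ?_
  · rintro s t hst ⟨M, hM, h⟩
    exact ⟨M, hM, fun z hz => h z (hst hz)⟩
  · rintro s t ⟨M, hM, h⟩ ⟨M', hM', h'⟩
    refine ⟨max M M', hM.trans (le_max_left _ _), fun z hz => ?_⟩
    rcases hz with hz | hz
    · exact (h z hz).imp (fun ⟨a, ha, hb⟩ => ⟨a, ha, hb.trans (le_max_left _ _)⟩)
        fun ⟨a, ha, hb⟩ => ⟨a, ha, hb.trans (le_max_left _ _)⟩
    · exact (h' z hz).imp (fun ⟨a, ha, hb⟩ => ⟨a, ha, hb.trans (le_max_right _ _)⟩)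
        fun ⟨a, ha, hb⟩ => ⟨a, ha, hb.trans (le_max_right _ _)⟩
  · intro z hz
    rcases not_and_or.1 (hFG z (hKU hz)) with hne | hne
    · obtain ⟨M, hM⟩ := hF.eventually_bounded (hKU hz) hne
      exact ⟨_, mem_nhdsWithin_of_mem_nhds hM, max M 0, le_max_right _ _, fun w hw =>
        Or.inl (hw.imp fun a ha => ⟨ha.1, ha.2.trans (le_max_left _ _)⟩)⟩
    · obtain ⟨M, hM⟩ := hG.eventually_bounded (hKU hz) hne
      exact ⟨_, mem_nhdsWithin_of_mem_nhds hM, max M 0, le_max_right _ _, fun w hw =>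
        Or.inr (hw.imp fun a ha => ⟨ha.1, ha.2.trans (le_max_left _ _)⟩)⟩

/-- If meromorphic `f_n → f` and `g_n → g` uniformly on `U` for the chordal distance,
none of the functions is identically `∞` on a connected component of `U`, and `f`, `g`
have no common pole, then `f_n + g_n → f + g` uniformly on every compact subset of
`U` for the chordal distance. -/
theorem meromorphic_sum_uniform_convergence
    (U : Set ℂ) (hU : IsOpen U)
    (f g : ℕ → ℂ → Option ℂ) (F G : ℂ → Option ℂ)
    (hf : ∀ n, MeroSphereOn (f n) U) (hg : ∀ n, MeroSphereOn (g n) U)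
    (hF : MeroSphereOn F U) (hG : MeroSphereOn G U)
    (hfne : ∀ n, ∀ z ∈ U, ∃ w ∈ connectedComponentIn U z, f n w ≠ none)
    (hgne : ∀ n, ∀ z ∈ U, ∃ w ∈ connectedComponentIn U z, g n w ≠ none)
    (hFne : ∀ z ∈ U, ∃ w ∈ connectedComponentIn U z, F w ≠ none)
    (hGne : ∀ z ∈ U, ∃ w ∈ connectedComponentIn U z, G w ≠ none)
    (hfF : ∀ ε : ℝ, 0 < ε → ∃ N : ℕ, ∀ n ≥ N, ∀ z ∈ U, chordal (f n z) (F z) < ε)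
    (hgG : ∀ ε : ℝ, 0 < ε → ∃ N : ℕ, ∀ n ≥ N, ∀ z ∈ U, chordal (g n z) (G z) < ε)
    (hnocommonpole : ∀ z ∈ U, ¬(F z = none ∧ G z = none)) :
    ∀ K : Set ℂ, K ⊆ U → IsCompact K → ∀ ε : ℝ, 0 < ε →
      ∃ N : ℕ, ∀ n ≥ N, ∀ z ∈ K,
        chordal (sphereAdd (f n z) (g n z)) (sphereAdd (F z) (G z)) < ε := by
  intro K hKU hK ε hε
  obtain ⟨M, hM, hbound⟩ := hF.exists_bound_of_no_common_pole hG hnocommonpole hKU hK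
  obtain ⟨δ, hδ, hadd⟩ := exists_chordal_sphereAdd_lt hM hε
  obtain ⟨N₁, hN₁⟩ := hfF δ hδ
  obtain ⟨N₂, hN₂⟩ := hgG δ hδ
  refine ⟨max N₁ N₂, fun n hn z hz => ?_⟩
  have hfz := hN₁ n (le_of_max_le_left hn) z (hKU hz)
  have hgz := hN₂ n (le_of_max_le_right hn) z (hKU hz)
  rcases hbound z hz with ⟨a, ha, haM⟩ | ⟨a, ha, haM⟩
  · rw [ha] at hfz ⊢
    exact hadd _ _ _ a haM hfz hgz
  · rw [sphereAdd_comm (f n z), sphereAdd_comm (F z), ha]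
    rw [ha] at hgz
    exact hadd _ _ _ a haM hgz hfz
end

section
/- Let λ, γ ∈ ℂ with γ ≠ 0, and let (λ_n)_{n≥1}, (γ_n)_{n≥1} be sequences of complex numbers with λ_n → λ and γ_n → γ as n → ∞. Then the functions z ↦ γ_n/(λ_n − z) converge to the function z ↦ γ/(λ − z) uniformly on all of ℂ, with respect to the chordal distance d on the Riemann sphere (each function taking the value ∞ at its pole). -/
open Filter Set Topology

attribute [local instance] Classical.propDecidable

/-- The chordal distance of two points given in homogeneous coordinates `[a : p]` and `[b : q]`. -/
lemma chordal_homogeneous {a b : ℂ} (ha : a ≠ 0) (hb : b ≠ 0) (p q : ℂ) :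
    chordal (if p = 0 then none else some (a / p)) (if q = 0 then none else some (b / q)) =
      ‖b * p - a * q‖ / (Real.sqrt (‖a‖ ^ 2 + ‖p‖ ^ 2) * Real.sqrt (‖b‖ ^ 2 + ‖q‖ ^ 2)) := by
  have sqrt_one_add_norm_div_sq : ∀ {c r : ℂ}, r ≠ 0 →
      Real.sqrt (1 + ‖c / r‖ ^ 2) = Real.sqrt (‖c‖ ^ 2 + ‖r‖ ^ 2) / ‖r‖ := by
    intro c r hr
    have hr' : 0 < ‖r‖ := norm_pos_iff.mpr hr
    rw [← Real.sqrt_sq hr'.le, ← Real.sqrt_div' _ (by positivity), Real.sqrt_sq hr'.le, norm_div]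
    congr 1
    field_simp
    ring
  have ha' : 0 < ‖a‖ := norm_pos_iff.mpr ha
  have hb' : 0 < ‖b‖ := norm_pos_iff.mpr hb
  by_cases hp : p = 0 <;> by_cases hq : q = 0
  · simp [hp, hq, chordal]
  · have hq' : 0 < ‖q‖ := norm_pos_iff.mpr hq
    have : 0 < Real.sqrt (‖b‖ ^ 2 + ‖q‖ ^ 2) := by positivity
    simp only [hp, hq, if_true, if_false, chordal, sqrt_one_add_norm_div_sq hq]
    simp
    field_simp
  · have hp' : 0 < ‖p‖ := norm_pos_iff.mpr hp
    have : 0 < Real.sqrt (‖a‖ ^ 2 + ‖p‖ ^ 2) := by positivity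
    simp only [hp, hq, if_true, if_false, chordal, sqrt_one_add_norm_div_sq hp]
    simp
    field_simp
  · have hp' : 0 < ‖p‖ := norm_pos_iff.mpr hp
    have hq' : 0 < ‖q‖ := norm_pos_iff.mpr hq
    have : 0 < Real.sqrt (‖a‖ ^ 2 + ‖p‖ ^ 2) := by positivity
    have : 0 < Real.sqrt (‖b‖ ^ 2 + ‖q‖ ^ 2) := by positivity
    have hsub : b / q - a / p = (b * p - a * q) / (q * p) := by field_simp
    simp only [hp, hq, if_false, chordal]
    rw [Real.sqrt_mul (by positivity), sqrt_one_add_norm_div_sq hp,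
      sqrt_one_add_norm_div_sq hq, hsub, norm_div, norm_mul q p]
    field_simp

lemma chordal_homogeneous_le {a b : ℂ} (ha : a ≠ 0) (hb : b ≠ 0) (p q : ℂ) :
    chordal (if p = 0 then none else some (a / p)) (if q = 0 then none else some (b / q)) ≤
      (‖p - q‖ + ‖b - a‖) / ‖a‖ := by
  have ha' : 0 < ‖a‖ := norm_pos_iff.mpr ha
  have hb' : 0 < ‖b‖ := norm_pos_iff.mpr hb
  rw [chordal_homogeneous ha hb]
  set S := Real.sqrt (‖a‖ ^ 2 + ‖p‖ ^ 2)
  set T := Real.sqrt (‖b‖ ^ 2 + ‖q‖ ^ 2)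
  have hS : ‖a‖ ≤ S := Real.le_sqrt_of_sq_le (by nlinarith [sq_nonneg ‖p‖])
  have hTb : ‖b‖ ≤ T := Real.le_sqrt_of_sq_le (by nlinarith [sq_nonneg ‖q‖])
  have hTq : ‖q‖ ≤ T := Real.le_sqrt_of_sq_le (by nlinarith [sq_nonneg ‖b‖])
  have hT : 0 < T := hb'.trans_le hTb
  have hnum : ‖b * p - a * q‖ ≤ (‖p - q‖ + ‖b - a‖) * T := by
    calc ‖b * p - a * q‖ = ‖b * (p - q) + (b - a) * q‖ := by congr 1; ring
      _ ≤ ‖b‖ * ‖p - q‖ + ‖b - a‖ * ‖q‖ := by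
        simpa only [norm_mul] using norm_add_le (b * (p - q)) ((b - a) * q)
      _ ≤ T * ‖p - q‖ + ‖b - a‖ * T := by gcongr
      _ = (‖p - q‖ + ‖b - a‖) * T := by ring
  calc ‖b * p - a * q‖ / (S * T) ≤ ((‖p - q‖ + ‖b - a‖) * T) / (‖a‖ * T) := by gcongr
    _ = (‖p - q‖ + ‖b - a‖) / ‖a‖ := mul_div_mul_right _ _ hT.ne'

/-- If `λ_n → λ` and `γ_n → γ ≠ 0`, then `z ↦ γ_n/(λ_n - z)` converges to
`z ↦ γ/(λ - z)` uniformly on all of `ℂ` for the chordal distance on the Riemann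
sphere, each function taking the value `∞` at its pole. -/
theorem single_pole_uniform_convergence
    (lam γ : ℂ) (hγ : γ ≠ 0) (lamn γn : ℕ → ℂ)
    (hlamn : Tendsto lamn atTop (𝓝 lam))
    (hγn : Tendsto γn atTop (𝓝 γ)) :
    ∀ ε : ℝ, 0 < ε → ∃ N : ℕ, ∀ n ≥ N, ∀ z : ℂ,
      chordal (if z = lamn n then none else some (γn n / (lamn n - z)))
        (if z = lam then none else some (γ / (lam - z))) < ε := by
  intro ε hε
  have hlim : Tendsto (fun n => (‖lamn n - lam‖ + ‖γ - γn n‖) / ‖γn n‖) atTop (𝓝 0) := by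
    have h := ((hlamn.sub_const lam).norm.add (hγn.const_sub γ).norm).div hγn.norm
      (norm_ne_zero_iff.mpr hγ)
    simpa [Pi.div_def] using h
  obtain ⟨N, hN⟩ := eventually_atTop.mp
    ((hlim.eventually_lt_const hε).and (hγn.eventually_ne hγ))
  refine ⟨N, fun n hn z => ?_⟩
  obtain ⟨hlt, hne⟩ := hN n hn
  have h := chordal_homogeneous_le hne hγ (lamn n - z) (lam - z)
  simp only [sub_eq_zero, eq_comm (b := z), sub_sub_sub_cancel_right] at h
  exact h.trans_lt hlt
end

section
/- Let p ≥ 1, and let (λ_k)_{1≤k≤p}, (λ_{n,k})_{n≥1, 1≤k≤p}, (γ_k)_{1≤k≤p}, (γ_{n,k})_{n≥1, 1≤k≤p} be complex numbers such that λ₁,…,λ_p are pairwise distinct, γ_k ≠ 0 for all k, and for each k ∈ {1,…,p}, λ_{n,k} → λ_k and γ_{n,k} → γ_k as n → ∞. Then the rational functions z ↦ Σ_{k=1}^{p} γ_{n,k}/(λ_{n,k} − z) converge, as n → ∞, to the function z ↦ Σ_{k=1}^{p} γ_k/(λ_k − z), uniformly on every compact subset of ℂ with respect to the chordal distance d on the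 Riemann sphere (each function taking the value ∞ at its poles). -/
open Filter Set Topology BigOperators

attribute [local instance] Classical.propDecidable

/-- The point `[a : b]` of the Riemann sphere. -/
noncomputable def spherePoint (a b : ℂ) : Option ℂ := if b = 0 then none else some (a / b)

/-- The numerator of `∑ k, γ k / (lam k - z)` over the common denominator
`∏ k, (lam k - z)`. -/
noncomputable def partialFractionNum {p : ℕ} (lam γ : Fin p → ℂ) (z : ℂ) : ℂ :=
  ∑ k, γ k * ∏ j ∈ Finset.univ.erase k, (lam j - z)

/-- The common denominator of `∑ k, γ k / (lam k - z)`. -/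
noncomputable def partialFractionDen {p : ℕ} (lam : Fin p → ℂ) (z : ℂ) : ℂ :=
  ∏ k, (lam k - z)

theorem sqrt_one_add_norm_div_sq (a : ℂ) {b : ℂ} (hb : b ≠ 0) :
    √(1 + ‖a / b‖ ^ 2) = √(‖a‖ ^ 2 + ‖b‖ ^ 2) / ‖b‖ := by
  have hb' : ‖b‖ ≠ 0 := norm_ne_zero_iff.2 hb
  rw [show 1 + ‖a / b‖ ^ 2 = (‖a‖ ^ 2 + ‖b‖ ^ 2) / ‖b‖ ^ 2 by
    rw [norm_div]; field_simp; ring, Real.sqrt_div (by positivity),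
    Real.sqrt_sq (norm_nonneg b)]

theorem sqrt_norm_sq_add_norm_sq_ne_zero {a b : ℂ} (h : b = 0 → a ≠ 0) :
    √(‖a‖ ^ 2 + ‖b‖ ^ 2) ≠ 0 := by
  refine (Real.sqrt_pos.2 ?_).ne'
  by_cases hb : b = 0
  · have := norm_pos_iff.2 (h hb)
    positivity
  · have := norm_pos_iff.2 hb
    positivity

/-- The chordal distance in homogeneous coordinates. -/
theorem chordal_spherePoint {a b c d : ℂ} (hab : b = 0 → a ≠ 0) (hcd : d = 0 → c ≠ 0) :
    chordal (spherePoint a b) (spherePoint c d) =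
      ‖b * c - a * d‖ / (√(‖a‖ ^ 2 + ‖b‖ ^ 2) * √(‖c‖ ^ 2 + ‖d‖ ^ 2)) := by
  have h₁ := sqrt_norm_sq_add_norm_sq_ne_zero hab
  have h₂ := sqrt_norm_sq_add_norm_sq_ne_zero hcd
  by_cases hb : b = 0 <;> by_cases hd : d = 0
  · simp [spherePoint, chordal, hb, hd]
  · have ha := norm_ne_zero_iff.2 (hab hb)
    have hd' := norm_ne_zero_iff.2 hd
    subst hb
    simp only [spherePoint, chordal, hd, if_true, if_false, sqrt_one_add_norm_div_sq c hd]
    simp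
    field_simp
  · have hc := norm_ne_zero_iff.2 (hcd hd)
    have hb' := norm_ne_zero_iff.2 hb
    subst hd
    simp only [spherePoint, chordal, hb, if_true, if_false, sqrt_one_add_norm_div_sq a hb]
    simp
    field_simp
  · have hb' := norm_ne_zero_iff.2 hb
    have hd' := norm_ne_zero_iff.2 hd
    have hsub : c / d - a / b = (b * c - a * d) / (b * d) := by field_simp
    simp only [spherePoint, chordal, hb, hd, if_false]
    rw [Real.sqrt_mul (by positivity), sqrt_one_add_norm_div_sq a hb,
      sqrt_one_add_norm_div_sq c hd, hsub, norm_div, norm_mul b d]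
    field_simp

theorem partialFractionDen_eq_zero_iff {p : ℕ} (lam : Fin p → ℂ) (z : ℂ) :
    partialFractionDen lam z = 0 ↔ ∃ k, lam k = z := by
  simp [partialFractionDen, Finset.prod_eq_zero_iff, sub_eq_zero]

theorem partialFractionNum_ne_zero {p : ℕ} {lam γ : Fin p → ℂ}
    (hdist : Function.Injective lam) (hγ : ∀ k, γ k ≠ 0) {z : ℂ}
    (hz : partialFractionDen lam z = 0) : partialFractionNum lam γ z ≠ 0 := by
  obtain ⟨k, rfl⟩ := (partialFractionDen_eq_zero_iff lam z).1 hz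
  rw [partialFractionNum, Finset.sum_eq_single k]
  · refine mul_ne_zero (hγ k) (Finset.prod_ne_zero_iff.2 fun j hj => ?_)
    exact sub_ne_zero.2 (hdist.ne (Finset.ne_of_mem_erase hj))
  · intro i _ hik
    rw [Finset.prod_eq_zero (Finset.mem_erase.2 ⟨hik.symm, Finset.mem_univ k⟩) (sub_self _),
      mul_zero]
  · simp

theorem spherePoint_partialFraction {p : ℕ} (lam γ : Fin p → ℂ) (z : ℂ) :
    spherePoint (partialFractionNum lam γ z) (partialFractionDen lam z) =
      if ∃ k, lam k = z then none else some (∑ k, γ k / (lam k - z)) := by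
  by_cases h : ∃ k, lam k = z
  · simp [spherePoint, (partialFractionDen_eq_zero_iff lam z).2 h, h]
  · have hden := mt (partialFractionDen_eq_zero_iff lam z).1 h
    rw [spherePoint, if_neg hden, if_neg h, partialFractionNum, Finset.sum_div]
    congr 1
    refine Finset.sum_congr rfl fun k _ => ?_
    have hk : lam k - z ≠ 0 := sub_ne_zero.2 fun hk => h ⟨k, hk⟩
    rw [div_eq_div_iff hden hk, partialFractionDen,
      ← Finset.mul_prod_erase _ _ (Finset.mem_univ k)]
    ring

theorem continuous_partialFractionNum {p : ℕ} :
    Continuous fun w : ((Fin p → ℂ) × (Fin p → ℂ)) × ℂ =>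
      partialFractionNum w.1.1 w.1.2 w.2 := by
  unfold partialFractionNum
  fun_prop

theorem continuous_partialFractionDen {p : ℕ} :
    Continuous fun w : ((Fin p → ℂ) × (Fin p → ℂ)) × ℂ => partialFractionDen w.1.1 w.2 := by
  unfold partialFractionDen
  fun_prop

/-- Near parameters with distinct poles and nonzero residues, the chordal distance between
the perturbed and the unperturbed sum is small near any given point. -/
theorem eventually_chordal_partialFraction_lt {p : ℕ} {lam γ : Fin p → ℂ}
    (hdist : Function.Injective lam) (hγ : ∀ k, γ k ≠ 0) (z : ℂ) {ε : ℝ} (hε : 0 < ε) :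
    ∀ᶠ w : ((Fin p → ℂ) × (Fin p → ℂ)) × ℂ in 𝓝 ((lam, γ), z),
      chordal
        (spherePoint (partialFractionNum w.1.1 w.1.2 w.2) (partialFractionDen w.1.1 w.2))
        (spherePoint (partialFractionNum lam γ w.2) (partialFractionDen lam w.2)) < ε := by
  let a := fun w : ((Fin p → ℂ) × (Fin p → ℂ)) × ℂ => partialFractionNum w.1.1 w.1.2 w.2
  let b := fun w : ((Fin p → ℂ) × (Fin p → ℂ)) × ℂ => partialFractionDen w.1.1 w.2
  let c := fun w : ((Fin p → ℂ) × (Fin p → ℂ)) × ℂ => partialFractionNum lam γ w.2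
  let d := fun w : ((Fin p → ℂ) × (Fin p → ℂ)) × ℂ => partialFractionDen lam w.2
  have ha : Continuous a := continuous_partialFractionNum
  have hb : Continuous b := continuous_partialFractionDen
  have hφ : Continuous fun w : ((Fin p → ℂ) × (Fin p → ℂ)) × ℂ => ((lam, γ), w.2) := by
    fun_prop
  have hc : Continuous c := ha.comp hφ
  have hd : Continuous d := hb.comp hφ
  have hcd : ∀ w, d w = 0 → c w ≠ 0 := fun w => partialFractionNum_ne_zero hdist hγ
  have hne : √(‖a ((lam, γ), z)‖ ^ 2 + ‖b ((lam, γ), z)‖ ^ 2) ≠ 0 :=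
    sqrt_norm_sq_add_norm_sq_ne_zero (hcd ((lam, γ), z))
  have hnum : Continuous fun w => √(‖a w‖ ^ 2 + ‖b w‖ ^ 2) := by fun_prop
  have hcont : ContinuousAt
      (fun w => ‖b w * c w - a w * d w‖ /
        (√(‖a w‖ ^ 2 + ‖b w‖ ^ 2) * √(‖c w‖ ^ 2 + ‖d w‖ ^ 2))) ((lam, γ), z) := by
    refine ContinuousAt.div (by fun_prop) (by fun_prop) (mul_ne_zero hne ?_)
    exact sqrt_norm_sq_add_norm_sq_ne_zero (hcd _)
  have hzero : ‖b ((lam, γ), z) * c ((lam, γ), z) - a ((lam, γ), z) * d ((lam, γ), z)‖ /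
      (√(‖a ((lam, γ), z)‖ ^ 2 + ‖b ((lam, γ), z)‖ ^ 2) *
        √(‖c ((lam, γ), z)‖ ^ 2 + ‖d ((lam, γ), z)‖ ^ 2)) < ε := by
    have : b ((lam, γ), z) * c ((lam, γ), z) - a ((lam, γ), z) * d ((lam, γ), z) = 0 := by
      simp only [a, b, c, d]; ring
    rw [this, norm_zero, zero_div]
    exact hε
  filter_upwards [hcont.eventually_lt_const hzero, hnum.continuousAt.eventually_ne hne]
    with w hlt hw
  have hab : b w = 0 → a w ≠ 0 := by
    intro hbw haw
    simp [hbw, haw] at hw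
  exact (chordal_spherePoint hab (hcd w)).trans_lt hlt

/-- If `λ_{n,k} → λ_k` (pairwise distinct) and `γ_{n,k} → γ_k ≠ 0`, then the rational
functions `z ↦ Σ_k γ_{n,k}/(λ_{n,k} - z)` converge to `z ↦ Σ_k γ_k/(λ_k - z)`
uniformly on every compact subset of `ℂ`, for the chordal distance on the Riemann
sphere, each function taking the value `∞` at its poles. -/
theorem rational_sum_uniform_convergence
    (p : ℕ) (hp : 1 ≤ p)
    (lam : Fin p → ℂ) (γ : Fin p → ℂ)
    (lamn : ℕ → Fin p → ℂ) (γn : ℕ → Fin p → ℂ)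
    (hdist : Function.Injective lam) (hγ : ∀ k, γ k ≠ 0)
    (hlamn : ∀ k, Tendsto (fun n => lamn n k) atTop (𝓝 (lam k)))
    (hγn : ∀ k, Tendsto (fun n => γn n k) atTop (𝓝 (γ k))) :
    ∀ K : Set ℂ, IsCompact K → ∀ ε : ℝ, 0 < ε →
      ∃ N : ℕ, ∀ n ≥ N, ∀ z ∈ K,
        chordal
          (if ∃ k, lamn n k = z then none
            else some (∑ k, γn n k / (lamn n k - z)))
          (if ∃ k, lam k = z then none
            else some (∑ k, γ k / (lam k - z))) < ε := by
  intro K hK ε hε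
  have hev := hK.eventually_forall_of_forall_eventually (x₀ := (lam, γ))
    (P := fun w z => chordal
      (spherePoint (partialFractionNum w.1 w.2 z) (partialFractionDen w.1 z))
      (spherePoint (partialFractionNum lam γ z) (partialFractionDen lam z)) < ε)
    fun z _ => eventually_chordal_partialFraction_lt hdist hγ z hε
  have hlim : Tendsto (fun n => (lamn n, γn n)) atTop (𝓝 (lam, γ)) :=
    (tendsto_pi_nhds.2 hlamn).prodMk_nhds (tendsto_pi_nhds.2 hγn)
  obtain ⟨N, hN⟩ := eventually_atTop.1 (hlim.eventually hev)
  refine ⟨N, fun n hn z hz => ?_⟩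
  have h := hN n hn z hz
  rwa [spherePoint_partialFraction, spherePoint_partialFraction] at h
end
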